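/- arXiv:2405.07296 — 2 statements merged into one kernel-verified Lean document; each statement's English description precedes it below -/
import Mathlib

section
/- Let m ∈ ℕ with m ≥ 1, let h : ℕ^m → ℕ be a polynomial in m variables with coefficients in ℕ and no constant term, and let p₁,…,p_m be minimal idempotent ultrafilters on ℕ. Then for every A ∈ h̃(⊗_{i=1}^m p_i) (where h̃ denotes the pushforward of ultrafilters along h) and every T ∈ 𝒫_f(ℙ), there exist functions α₁,…,α_m : 𝒫_f(ℕ^ℕ) → ℕ and H₁,…,H_m : 𝒫_f(ℕ^ℕ) → 𝒫_f(ℕ) such that (1) whenever G ⊊ K in 𝒫_f(ℕ^ℕ), max H_j(G) < min H_j(K) for every j ∈ {1,…,m}; (2) whenever G₁ ⊊ G₂ ⊊ ⋯ ⊊ G_n ⊊ ⋯ is an infinite strictly increasing chain in 𝒫_f(ℕ^ℕ), f_i ∈ G_i for each i ∈ ℕ, β₁ < ⋯ < β_m are in 𝒫_f(ℕ), and P₁,…,P_m ∈ T, then h(Σ_{i∈β₁}α₁(G_i) + P₁(Σ_{i∈β₁}Σ_{t∈H₁(G_i)}f_i(t)), …, Σ_{i∈β_m}α_m(G_i) +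 P_m(Σ_{i∈β_m}Σ_{t∈H_m(G_i)}f_i(t))) ∈ A; and (3) if p₁ = ⋯ = p_m = p for a single minimal idempotent p, then the functions can be chosen with α₁ = ⋯ = α_m and H₁ = ⋯ = H_m. -/
namespace MultiCST

/-- The sum `p + q` of ultrafilters on ℕ: `A ∈ p + q` iff `{x : {y : x+y ∈ A} ∈ q} ∈ p`. -/
def uAdd (p q : Ultrafilter ℕ) : Ultrafilter ℕ :=
  p.bind fun x => q.map fun y => x + y

/-- `A ⊆ ℕ` is a J-set. -/
def IsJSet (A : Set ℕ) : Prop :=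
  ∀ F : Finset (ℕ → ℕ), F.Nonempty →
    ∃ (a : ℕ) (β : Finset ℕ), β.Nonempty ∧ ∀ f ∈ F, a + ∑ t ∈ β, f t ∈ A

/-- `p ∈ 𝒥`: every member of `p` is a J-set. -/
def MemJ (p : Ultrafilter ℕ) : Prop := ∀ A : Set ℕ, A ∈ p → IsJSet A

/-- `p` is an idempotent ultrafilter. -/
def IdempotentUF (p : Ultrafilter ℕ) : Prop := uAdd p p = p

/-- `p` is a minimal idempotent ultrafilter. -/
def IsMinimalIdempotent (p : Ultrafilter ℕ) : Prop :=
  IdempotentUF p ∧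
    ∀ q : Ultrafilter ℕ, IdempotentUF q → uAdd q p = q → uAdd p q = q → q = p

/-- Tensor product `⊗_{i=1}^m p_i` of ultrafilters on ℕ, as an ultrafilter on `Fin m → ℕ`. -/
def tensor : ∀ m : ℕ, (Fin m → Ultrafilter ℕ) → Ultrafilter (Fin m → ℕ)
  | 0, _ => pure fun i => i.elim0
  | m + 1, p =>
      (p 0).bind fun x => (tensor m fun i => p i.succ).map fun v => Fin.cons x v

/-- `f : ℕ → ℕ` is (given by) a polynomial with coefficients in ℕ and zero constant term. -/
def IsPolyZeroConst (f : ℕ → ℕ) : Prop :=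
  ∃ P : Polynomial ℕ, P.coeff 0 = 0 ∧ ∀ x, f x = P.eval x

/-- The linear combination `a₁·p₁ + a₂·p₂ + ⋯ + a_m·p_m` of ultrafilters on ℕ. -/
def linComb : ∀ m : ℕ, (Fin m → ℕ) → (Fin m → Ultrafilter ℕ) → Ultrafilter ℕ
  | 0, _, _ => pure 0
  | m + 1, a, p =>
      uAdd ((p 0).map fun x => a 0 * x)
        (linComb m (fun i => a i.succ) fun i => p i.succ)

/-- The pair of families `(α, H)` witnesses the polynomial multidimensional conclusion for
`A` via `h` and the polynomials in `T` (infinitary form). -/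
def GoodWitness (m : ℕ) (h : (Fin m → ℕ) → ℕ) (A : Set ℕ) (T : Finset (ℕ → ℕ))
    (α : Fin m → Finset (ℕ → ℕ) → ℕ) (H : Fin m → Finset (ℕ → ℕ) → Finset ℕ) : Prop :=
  (∀ (j : Fin m) (F : Finset (ℕ → ℕ)), F.Nonempty → (H j F).Nonempty) ∧
  (∀ (j : Fin m) (F G : Finset (ℕ → ℕ)), F.Nonempty → F ⊂ G →
    ∀ x ∈ H j F, ∀ y ∈ H j G, x < y) ∧
  (∀ G : ℕ → Finset (ℕ → ℕ),
    (∀ i, (G i).Nonempty) → (∀ i j, i < j → G i ⊂ G j) →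
    ∀ f : ℕ → ℕ → ℕ, (∀ i, f i ∈ G i) →
    ∀ β : Fin m → Finset ℕ,
      (∀ l, (β l).Nonempty) →
      (∀ l l' : Fin m, l < l' → ∀ x ∈ β l, ∀ y ∈ β l', x < y) →
      ∀ P : Fin m → ℕ → ℕ, (∀ l, P l ∈ T) →
      h (fun l => (∑ i ∈ β l, α l (G i)) +
          P l (∑ i ∈ β l, ∑ t ∈ H l (G i), f i t)) ∈ A)

end MultiCST

namespace MultiCST

open Classical

section PET

variable {M : Type*} [AddCommMonoid M]

/-- Polynomial maps of degree at most `d` vanishing at zero. -/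
def W (M : Type*) [AddCommMonoid M] : ℕ → AddSubgroup (M → ℤ)
  | 0 => ⊥
  | d + 1 =>
    { carrier := {φ | φ 0 = 0 ∧ ∀ y, (fun z => φ (y + z) - φ y - φ z) ∈ W M d}
      zero_mem' := by
        refine ⟨rfl, fun y => ?_⟩
        have : (fun z : M => (0 : M → ℤ) (y + z) - (0 : M → ℤ) y - (0 : M → ℤ) z) = 0 := by
          ext z; simp
        rw [this]; exact (W M d).zero_mem
      add_mem' := by
        rintro a b ⟨ha, ha'⟩ ⟨hb, hb'⟩
        refine ⟨by simp [ha, hb], fun y => ?_⟩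
        have := (W M d).add_mem (ha' y) (hb' y)
        convert this using 1
        ext z; simp; ring
      neg_mem' := by
        rintro a ⟨ha, ha'⟩
        refine ⟨by simp [ha], fun y => ?_⟩
        have := (W M d).neg_mem (ha' y)
        convert this using 1
        ext z; simp; ring }

lemma mem_W_succ (d : ℕ) (φ : M → ℤ) :
    φ ∈ W M (d + 1) ↔ φ 0 = 0 ∧ ∀ y, (fun z => φ (y + z) - φ y - φ z) ∈ W M d := Iff.rfl

lemma W_le_succ (d : ℕ) : W M d ≤ W M (d + 1) := by
  induction d with
  | zero =>
    intro φ hφ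
    have : φ = 0 := hφ
    subst this
    exact (W M 1).zero_mem
  | succ d ih =>
    rintro φ ⟨h0, h1⟩
    exact ⟨h0, fun y => ih (h1 y)⟩

lemma W_mono : Monotone (W M) := monotone_nat_of_le_succ W_le_succ

lemma W_zero {d : ℕ} {φ : M → ℤ} (h : φ ∈ W M d) : φ 0 = 0 := by
  have := W_le_succ d h
  exact this.1

/-- shifted map -/
def psi (y : M) (φ : M → ℤ) : M → ℤ := fun z => φ (y + z) - φ y

lemma psi_sub {d : ℕ} {φ : M → ℤ} (y : M) (h : φ ∈ W M (d + 1)) : psi y φ - φ ∈ W M d := h.2 y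

lemma psi_mem {d : ℕ} {φ : M → ℤ} (y : M) (h : φ ∈ W M d) : psi y φ ∈ W M d := by
  have h1 := psi_sub y (W_le_succ d h)
  have := (W M d).add_mem h1 h
  simpa using this

/-- weight of a family in a degree -/
noncomputable def wt (Φ : Set (M → ℤ)) (d : ℕ) : ℕ :=
  Set.ncard (((QuotientAddGroup.mk : (M → ℤ) → (M → ℤ) ⧸ W M d) '' (Φ ∩ W M (d + 1))) \ {0})

lemma wt_le {Φ Φ' : Set (M → ℤ)} (hΦ : Φ.Finite) (D e d : ℕ) (hed : e < d)
    (hD : Φ ⊆ W M D)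
    (φ₁ : M → ℤ) (h1 : φ₁ ∈ W M (e + 1))
    (hΦ' : ∀ χ ∈ Φ', ∃ φ ∈ Φ, ∃ y, χ = psi y φ - φ₁) : wt Φ' d ≤ wt Φ d := by
  apply Set.ncard_le_ncard _ (((hΦ.inter_of_left _).image _).sdiff)
  apply Set.sdiff_subset_sdiff_left
  rintro _ ⟨χ, ⟨hχ, hχd⟩, rfl⟩
  obtain ⟨φ, hφ, y, rfl⟩ := hΦ' _ hχ
  have h1d : φ₁ ∈ W M d := W_mono hed h1
  have hφd : φ ∈ W M (d + 1) := by
    by_contra hcon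
    -- find the exact degree of `φ`
    have hex : ∃ n, φ ∈ W M n := ⟨D, hD hφ⟩
    have hn := Nat.find_spec hex
    have hmin := fun k => @Nat.find_min _ _ hex k
    set n := Nat.find hex
    have hnd : d + 1 < n := by
      by_contra h
      exact hcon (W_mono (by omega) hn)
    obtain ⟨k, hk⟩ : ∃ k, n = k + 1 := ⟨n - 1, by omega⟩
    rw [hk] at hn
    have h2 := psi_sub y hn
    apply hmin k (by omega)
    have h3 : psi y φ ∈ W M k := by
      have : psi y φ - φ₁ ∈ W M k := W_mono (by omega) hχd
      have h4 := (W M k).add_mem this (W_mono (by omega) h1d)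
      simpa using h4
    have := (W M k).sub_mem h3 h2
    simpa using this
  refine ⟨φ, ⟨hφ, hφd⟩, ?_⟩
  rw [QuotientAddGroup.eq]
  have := (W M d).sub_mem (psi_sub y hφd) h1d
  convert this using 1
  abel

lemma wt_lt {Φ Φ' : Set (M → ℤ)} (hΦ : Φ.Finite) (D e : ℕ)
    (hD : Φ ⊆ W M D)
    (φ₁ : M → ℤ) (h1Φ : φ₁ ∈ Φ) (h1 : φ₁ ∈ W M (e + 1)) (h1' : φ₁ ∉ W M e)
    (hmin : ∀ φ ∈ Φ, φ ≠ 0 → φ ∉ W M e)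
    (hΦ' : ∀ χ ∈ Φ', ∃ φ ∈ Φ, φ ≠ 0 ∧ ∃ y, χ = psi y φ - φ₁) : wt Φ' e < wt Φ e := by
  unfold wt
  set I := ((QuotientAddGroup.mk : (M → ℤ) → (M → ℤ) ⧸ W M e) '' (Φ ∩ W M (e + 1))) \ {0} with hI
  have hIf : I.Finite := ((hΦ.inter_of_left _).image _).sdiff
  have hmem : (QuotientAddGroup.mk φ₁ : (M → ℤ) ⧸ W M e) ∈ I := by
    refine ⟨⟨φ₁, ⟨h1Φ, h1⟩, rfl⟩, ?_⟩
    simpa using h1'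
  have hlt : (I \ {(QuotientAddGroup.mk φ₁ : (M → ℤ) ⧸ W M e)}).ncard < I.ncard :=
    Set.ncard_sdiff_singleton_lt_of_mem hmem hIf
  refine lt_of_le_of_lt ?_ hlt
  have hsub : ((QuotientAddGroup.mk : (M → ℤ) → (M → ℤ) ⧸ W M e) '' (Φ' ∩ W M (e + 1))) \ {0} ⊆
      (fun c => c - (QuotientAddGroup.mk φ₁ : (M → ℤ) ⧸ W M e)) ''
        (I \ {(QuotientAddGroup.mk φ₁ : (M → ℤ) ⧸ W M e)}) := by
    rintro _ ⟨⟨χ, ⟨hχ, hχd⟩, rfl⟩, hne⟩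
    obtain ⟨φ, hφ, hφ0, y, rfl⟩ := hΦ' _ hχ
    have hφd : φ ∈ W M (e + 1) := by
      by_contra hcon
      have hex : ∃ n, φ ∈ W M n := ⟨D, hD hφ⟩
      have hn := Nat.find_spec hex
      have hmin := fun k => @Nat.find_min _ _ hex k
      set n := Nat.find hex
      have hnd : e + 1 < n := by
        by_contra h
        exact hcon (W_mono (by omega) hn)
      obtain ⟨k, hk⟩ : ∃ k, n = k + 1 := ⟨n - 1, by omega⟩
      rw [hk] at hn
      have h2 := psi_sub y hn
      apply hmin k (by omega)
      have h3 : psi y φ ∈ W M k := by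
        have : psi y φ - φ₁ ∈ W M k := W_mono (by omega) hχd
        have h4 := (W M k).add_mem this (W_mono (by omega) h1)
        simpa using h4
      have := (W M k).sub_mem h3 h2
      simpa using this
    have heq : (QuotientAddGroup.mk (psi y φ - φ₁) : (M → ℤ) ⧸ W M e) =
        QuotientAddGroup.mk φ - QuotientAddGroup.mk φ₁ := by
      rw [← QuotientAddGroup.mk_sub, eq_comm, QuotientAddGroup.eq]
      have := psi_sub y hφd
      convert this using 1
      abel
    rw [heq] at hne ⊢
    refine ⟨QuotientAddGroup.mk φ, ⟨⟨⟨φ, ⟨hφ, hφd⟩, rfl⟩, ?_⟩, ?_⟩, rfl⟩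
    · simpa using hmin φ hφ hφ0
    · intro h
      apply hne
      simp only [Set.mem_singleton_iff] at h ⊢
      rw [h, sub_self]
  calc _ ≤ _ := Set.ncard_le_ncard hsub ((hIf.sdiff).image _)
    _ ≤ _ := Set.ncard_image_le hIf.sdiff

lemma lex_of_le {D : ℕ} (u v : Fin D → ℕ) (e : Fin D) (he : u e < v e)
    (h : ∀ d, e < d → u d ≤ v d) : Pi.Lex (· > ·) (fun {_} => (· < ·)) u v := by
  obtain ⟨i, hi, himax⟩ := (Set.toFinite {d : Fin D | u d < v d ∧ e ≤ d}).exists_maximal ⟨e, he, le_rfl⟩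
  refine ⟨i, fun j hj => ?_, hi.1⟩
  have hj' : i < j := hj
  by_contra hne
  have hej : e < j := lt_of_le_of_lt hi.2 hj'
  have := himax (y := j) ⟨lt_of_le_of_ne (h j hej) hne, hej.le⟩ hj'.le
  exact absurd this (not_le.mpr hj')

/-- The abstract properties of largeness. -/
structure IsLargeFam (Large : Set ℤ → Prop) : Prop where
  mono : ∀ A B : Set ℤ, A ⊆ B → Large A → Large B
  shift : ∀ (A : Set ℤ) (k : ℤ), Large A → Large {a | a + k ∈ A}
  cover : ∀ A, Large A → ∃ S : Finset ℤ, ∀ B, Large B → ∃ s ∈ S, Large {b | b ∈ B ∧ b + s ∈ A}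

theorem pet {Large : Set ℤ → Prop} (hL : IsLargeFam Large) (x : ℕ → M) (D : ℕ) :
    ∀ Φ : Set (M → ℤ), Φ.Finite → Φ ⊆ W M D → ∀ A, Large A → ∀ N : ℕ,
      ∃ β : Finset ℕ, β.Nonempty ∧ (∀ t ∈ β, N < t) ∧
        Large {a | a ∈ A ∧ ∀ φ ∈ Φ, a + φ (∑ t ∈ β, x t) ∈ A} := by
  have wf : WellFounded (Pi.Lex (· > ·) (fun {_} => (· < ·)) : (Fin D → ℕ) → (Fin D → ℕ) → Prop) :=
    Pi.Lex.wellFounded _ (fun _ => wellFounded_lt)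
  intro Φ
  induction Φ using (InvImage.wf (fun Φ : Set (M → ℤ) => fun d : Fin D => wt Φ d) wf).induction with
  | _ Φ ih =>
  intro hΦ hΦD A hA N
  by_cases htriv : ∀ φ ∈ Φ, φ = 0
  · refine ⟨{N + 1}, by simp, by simp, hL.mono A _ ?_ hA⟩
    intro a ha
    refine ⟨ha, fun φ hφ => ?_⟩
    rw [htriv φ hφ]; simpa using ha
  push Not at htriv
  have hex : ∃ e, ∃ φ ∈ Φ, φ ≠ 0 ∧ φ ∈ W M (e + 1) := by
    obtain ⟨φ, hφ, h0⟩ := htriv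
    exact ⟨D, φ, hφ, h0, W_le_succ D (hΦD hφ)⟩
  have he := Nat.find_spec hex
  have hmin := fun k => @Nat.find_min _ _ hex k
  have hmin' := fun k => @Nat.find_min' _ _ hex k
  set e := Nat.find hex
  obtain ⟨φ₁, h1Φ, h10, h1e⟩ := he
  have hmin2 : ∀ φ ∈ Φ, φ ≠ 0 → φ ∉ W M e := by
    intro φ hφ h0 hmem
    rcases Nat.eq_zero_or_pos e with h | h
    · rw [h] at hmem; exact h0 hmem
    · obtain ⟨k, hk⟩ : ∃ k, e = k + 1 := ⟨e - 1, by omega⟩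
      rw [hk] at hmem
      exact hmin k (by omega) ⟨φ, hφ, h0, hmem⟩
  have heD : e < D := by
    rcases Nat.eq_zero_or_pos D with h | h
    · subst h
      exact absurd (hΦD h1Φ) h10
    · have := hmin' (D - 1) ⟨φ₁, h1Φ, h10, by rw [Nat.sub_add_cancel h]; exact hΦD h1Φ⟩
      omega
  obtain ⟨S, hS⟩ := hL.cover A hA
  -- colour focusing
  have key : ∀ n : ℕ, ∀ S' : Finset ℤ, S' ⊆ S → S.card = S'.card + n →
      ∀ (γ : ℤ → Finset ℕ) (N' : ℕ) (V : Set ℤ), Large V → N ≤ N' →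
      (∀ s ∈ S', (γ s).Nonempty ∧ (∀ t ∈ γ s, N < t) ∧ (∀ t ∈ γ s, t ≤ N')) →
      (∀ s ∈ S', ∀ a ∈ V, ∀ φ ∈ Φ, φ ≠ 0 → a + φ (∑ t ∈ γ s, x t) + s ∈ A) →
      ∃ β : Finset ℕ, β.Nonempty ∧ (∀ t ∈ β, N < t) ∧
        Large {a | a ∈ A ∧ ∀ φ ∈ Φ, a + φ (∑ t ∈ β, x t) ∈ A} := by
    intro n
    induction n with
    | zero =>
      intro S' hS' hcard γ N' V hV hN hγ hfoc
      obtain rfl : S' = S := Finset.eq_of_subset_of_card_le hS' (by omega)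
      obtain ⟨s, hs, hlarge⟩ := hS V hV
      refine ⟨γ s, (hγ s hs).1, (hγ s hs).2.1, ?_⟩
      refine hL.mono _ _ ?_ (hL.shift _ (-s) hlarge)
      rintro a ⟨haV, haA⟩
      have haA' : a ∈ A := by simpa using haA
      refine ⟨haA', fun φ hφ => ?_⟩
      by_cases h0 : φ = 0
      · rw [h0]; simpa using haA'
      · have := hfoc s hs _ haV φ hφ h0
        convert this using 1; ring
    | succ n ihn =>
      intro S' hS' hcard γ N' V hV hN hγ hfoc
      obtain ⟨s, hs, hlarge⟩ := hS V hV
      by_cases hsS : s ∈ S'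
      · refine ⟨γ s, (hγ s hsS).1, (hγ s hsS).2.1, ?_⟩
        refine hL.mono _ _ ?_ (hL.shift _ (-s) hlarge)
        rintro a ⟨haV, haA⟩
        have haA' : a ∈ A := by simpa using haA
        refine ⟨haA', fun φ hφ => ?_⟩
        by_cases h0 : φ = 0
        · rw [h0]; simpa using haA'
        · have := hfoc s hsS _ haV φ hφ h0
          convert this using 1; ring
      set γ' : ℤ → Finset ℕ := fun r => if r ∈ S' then γ r else ∅ with hγ'
      set V1 : Set ℤ := {b | b ∈ V ∧ b + s ∈ A} with hV1
      set Φ' : Set (M → ℤ) :=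
        (fun q : ℤ × (M → ℤ) => psi (∑ t ∈ γ' q.1, x t) q.2 - φ₁) ''
          ((insert s S' : Finset ℤ) ×ˢ {φ | φ ∈ Φ ∧ φ ≠ 0}) with hΦ'
      have hfin : Φ'.Finite :=
        ((Finset.finite_toSet _).prod (hΦ.subset fun φ h => h.1)).image _
      have hΦ'D : Φ' ⊆ W M D := by
        rintro _ ⟨⟨r, φ⟩, ⟨_, hφ⟩, rfl⟩
        exact (W M D).sub_mem (psi_mem _ (hΦD hφ.1)) (hΦD h1Φ)
      have hΦ'e : ∀ χ ∈ Φ', ∃ φ ∈ Φ, φ ≠ 0 ∧ ∃ y, χ = psi y φ - φ₁ := by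
        rintro _ ⟨⟨r, φ⟩, ⟨_, hφ⟩, rfl⟩
        exact ⟨φ, hφ.1, hφ.2, _, rfl⟩
      have hrel : Pi.Lex (· > ·) (fun {_} => (· < ·)) (fun d : Fin D => wt Φ' d)
          (fun d : Fin D => wt Φ d) := by
        apply lex_of_le _ _ ⟨e, heD⟩
        · exact wt_lt hΦ D e hΦD φ₁ h1Φ h1e (hmin2 _ h1Φ h10) hmin2 hΦ'e
        · intro d hd
          refine wt_le hΦ D e d hd hΦD φ₁ h1e ?_
          intro χ hχ
          obtain ⟨φ, h1, _, h2⟩ := hΦ'e χ hχ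
          exact ⟨φ, h1, h2⟩
      obtain ⟨β, hβne, hβN, hβL⟩ := ih Φ' hrel hfin hΦ'D V1 hlarge N'
      have hdisj : ∀ r, Disjoint (γ' r) β := by
        intro r
        rw [Finset.disjoint_left]
        intro t ht htβ
        by_cases hr : r ∈ S'
        · simp only [hγ', hr, if_true] at ht
          have := (hγ r hr).2.2 t ht
          have := hβN t htβ
          omega
        · simp [hγ', hr] at ht
      refine ihn (insert s S') (Finset.insert_subset hs hS')
        (by rw [Finset.card_insert_of_notMem hsS]; omega)
        (fun r => γ' r ∪ β) (max N' (β.sup id))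
        {a | a + φ₁ (∑ t ∈ β, x t) ∈ {a | a ∈ V1 ∧ ∀ φ ∈ Φ', a + φ (∑ t ∈ β, x t) ∈ V1}}
        (hL.shift _ _ hβL) (le_max_of_le_left hN) ?_ ?_
      · intro r hr
        refine ⟨hβne.mono Finset.subset_union_right, ?_, ?_⟩
        · intro t ht
          rcases Finset.mem_union.mp ht with ht | ht
          · by_cases hr : r ∈ S'
            · simp only [hγ', hr, if_true] at ht
              exact (hγ r hr).2.1 t ht
            · simp [hγ', hr] at ht
          · exact lt_of_le_of_lt hN (hβN t ht)
        · intro t ht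
          rcases Finset.mem_union.mp ht with ht | ht
          · by_cases hr : r ∈ S'
            · simp only [hγ', hr, if_true] at ht
              exact le_max_of_le_left ((hγ r hr).2.2 t ht)
            · simp [hγ', hr] at ht
          · exact le_max_of_le_right (Finset.le_sup (f := id) ht)
      · intro r hr a ha φ hφ h0
        have h2 := ha.2 (psi (∑ t ∈ γ' r, x t) φ - φ₁)
          ⟨(r, φ), ⟨Finset.mem_coe.mpr hr, hφ, h0⟩, rfl⟩
        rw [Finset.sum_union (hdisj r)]
        simp only [psi, Pi.sub_apply] at h2
        have heq : a + φ₁ (∑ t ∈ β, x t) + (φ (∑ t ∈ γ' r, x t + ∑ t ∈ β, x t) -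
          φ (∑ t ∈ γ' r, x t) - φ₁ (∑ t ∈ β, x t)) =
          a + φ (∑ t ∈ γ' r, x t + ∑ t ∈ β, x t) - φ (∑ t ∈ γ' r, x t) := by ring
        rw [heq] at h2
        by_cases hrS : r ∈ S'
        · have := hfoc r hrS _ h2.1 φ hφ h0
          simp only [hγ', hrS, if_true] at this ⊢
          convert this using 1; ring
        · have hrs : r = s := by
            rcases Finset.mem_insert.mp hr with h | h
            · exact h
            · exact absurd h hrS
          have h3 := h2.2
          subst hrs
          have hz := W_zero (hΦD hφ)
          simp only [hγ', hrS, if_false, Finset.sum_empty, hz, sub_zero] at h3 ⊢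
          exact h3
  exact key S.card ∅ (by simp) (by simp) (fun _ => ∅) N A hA le_rfl (by simp) (by simp)

lemma W_pow (g : M →+ ℤ) (n : ℕ) : (fun z => (g z) ^ (n + 1)) ∈ W M (n + 1) := by
  induction n using Nat.strong_induction_on with
  | _ n ih =>
  refine ⟨by simp, fun y => ?_⟩
  have : (fun z => (g (y + z)) ^ (n + 1) - (g y) ^ (n + 1) - (g z) ^ (n + 1)) =
      ∑ i ∈ Finset.range n, ((g y) ^ (n - i) * ((n + 1).choose (i + 1) : ℤ)) •
        (fun z => (g z) ^ (i + 1)) := by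
    ext z
    simp only [map_add, Finset.sum_apply, Pi.smul_apply, smul_eq_mul]
    rw [add_comm (g y), add_pow, Finset.sum_range_succ, Finset.sum_range_succ']
    simp only [Nat.add_sub_add_right]
    simp only [pow_zero, one_mul, mul_one, Nat.choose_zero_right, Nat.choose_self, Nat.cast_one,
      Nat.sub_self, Nat.sub_zero]
    have : ∀ a b c d : ℤ, a = b → a + c + d - c - d = b := by intros; omega
    apply this
    apply Finset.sum_congr rfl
    intro i _
    ring
  rw [this]
  refine sum_mem fun i hi => ?_
  have hi' := Finset.mem_range.mp hi
  exact (W M n).zsmul_mem (W_mono (by omega) (ih i hi')) _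

lemma W_poly (g : M →+ ℤ) (P : Polynomial ℤ) (hP : P.coeff 0 = 0) :
    (fun z => P.eval (g z)) ∈ W M P.natDegree := by
  have : (fun z => P.eval (g z)) =
      ∑ i ∈ Finset.range P.natDegree, P.coeff (i + 1) • (fun z => (g z) ^ (i + 1)) := by
    ext z
    simp only [Finset.sum_apply, Pi.smul_apply, smul_eq_mul]
    rw [Polynomial.eval_eq_sum_range, Finset.sum_range_succ']
    simp [hP]
  rw [this]
  refine sum_mem fun i hi => ?_
  have hi' := Finset.mem_range.mp hi
  exact (W M _).zsmul_mem (W_mono (by omega) (W_pow g i)) _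

end PET

end MultiCST
namespace MultiCST

section Ultra

lemma mem_uAdd (p q : Ultrafilter ℕ) (A : Set ℕ) :
    A ∈ uAdd p q ↔ {x | {y | x + y ∈ A} ∈ q} ∈ p := Iff.rfl

lemma uAdd_assoc (p q r : Ultrafilter ℕ) : uAdd (uAdd p q) r = uAdd p (uAdd q r) := by
  apply Ultrafilter.coe_inj.mp
  ext A
  change A ∈ uAdd (uAdd p q) r ↔ A ∈ uAdd p (uAdd q r)
  simp only [mem_uAdd, add_assoc, Set.mem_ofPred_eq]

lemma continuous_uAdd (q : Ultrafilter ℕ) : Continuous (fun p => uAdd p q) :=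
  ultrafilterBasis_is_basis.continuous_iff.2 <| Set.forall_mem_range.mpr fun s =>
    ultrafilter_isOpen_basic {x : ℕ | {y | x + y ∈ s} ∈ q}

lemma minimal_prop {p : Ultrafilter ℕ} (hp : IsMinimalIdempotent p) (q : Ultrafilter ℕ) :
    ∃ r, p = uAdd r (uAdd q p) := by
  let _ : AddSemigroup (Ultrafilter ℕ) := { add := uAdd, add_assoc := uAdd_assoc }
  obtain ⟨e, ⟨r, hr⟩, he⟩ := exists_idempotent_in_compact_add_subsemigroup
    (M := Ultrafilter ℕ) continuous_uAdd
    (Set.range fun r => uAdd r (uAdd q p)) ⟨_, q, rfl⟩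
    (isCompact_range (continuous_uAdd _)) (by
      rintro _ ⟨x, rfl⟩ _ ⟨y, rfl⟩
      exact ⟨uAdd (uAdd x (uAdd q p)) y, uAdd_assoc _ _ _⟩)
  have hpp : uAdd p p = p := hp.1
  have he : uAdd e e = e := he
  have hr : uAdd r (uAdd q p) = e := hr
  have hep : uAdd e p = e := by
    rw [← hr, uAdd_assoc, uAdd_assoc, hpp]
  have h1 : uAdd p e = p := by
    apply hp.2
    · change uAdd (uAdd p e) (uAdd p e) = _
      rw [uAdd_assoc, ← uAdd_assoc e p e, hep, he]
    · rw [uAdd_assoc, hep]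
    · rw [← uAdd_assoc, hpp]
  refine ⟨uAdd p r, ?_⟩
  rw [uAdd_assoc, hr, h1]

/-- Largeness with respect to the minimal left ideal of `p`. -/
def LargeP (p : Ultrafilter ℕ) (A : Set ℤ) : Prop :=
  ∃ q, {n : ℕ | (n : ℤ) ∈ A} ∈ uAdd q p

lemma uAdd_pure (k : ℕ) (q : Ultrafilter ℕ) (A : Set ℕ) :
    A ∈ uAdd (pure k) q ↔ {y | k + y ∈ A} ∈ q := Iff.rfl

lemma uAdd_pure_comm (k : ℕ) (q : Ultrafilter ℕ) : uAdd (pure k) q = uAdd q (pure k) := by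
  apply Ultrafilter.coe_inj.mp
  ext A
  change A ∈ uAdd (pure k) q ↔ A ∈ uAdd q (pure k)
  rw [uAdd_pure, mem_uAdd]
  have : {y | k + y ∈ A} = {x | {y | x + y ∈ A} ∈ (pure k : Ultrafilter ℕ)} := by
    ext x
    simp [add_comm]
  rw [this]

lemma largeP_fam {p : Ultrafilter ℕ} (hp : IsMinimalIdempotent p) : IsLargeFam (LargeP p) where
  mono := by
    rintro A B hAB ⟨q, hq⟩
    exact ⟨q, Filter.mem_of_superset hq fun n hn => hAB hn⟩
  shift := by
    rintro A k ⟨q, hq⟩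
    rcases Int.eq_nat_or_neg k with ⟨n, rfl | rfl⟩
    · -- use surjectivity
      obtain ⟨r, hr⟩ := minimal_prop hp (uAdd (pure n) q)
      have h2 : uAdd q p = uAdd (pure n) (uAdd (uAdd (uAdd q r) q) p) := by
        conv_lhs => rw [hr]
        simp only [← uAdd_assoc]
        rw [uAdd_pure_comm n q, uAdd_assoc q (pure n) r, uAdd_pure_comm n r, ← uAdd_assoc]
      rw [h2, uAdd_pure] at hq
      refine ⟨_, Filter.mem_of_superset hq ?_⟩
      intro y hy
      have hy : ((n + y : ℕ) : ℤ) ∈ A := hy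
      change (y : ℤ) + n ∈ A
      push_cast at hy
      rwa [add_comm]
    · refine ⟨uAdd (pure n) q, ?_⟩
      rw [uAdd_assoc, uAdd_pure]
      refine Filter.mem_of_superset hq ?_
      intro y hy
      change ((n + y : ℕ) : ℤ) + -n ∈ A
      push_cast
      have hy : (y : ℤ) ∈ A := hy
      convert hy using 1; ring
  cover := by
    rintro A ⟨q₀, hq₀⟩
    set U : ℕ → Set (Ultrafilter ℕ) := fun x =>
      {q | {n : ℕ | {y : ℕ | ((x + (n + y) : ℕ) : ℤ) ∈ A} ∈ p} ∈ q}
    obtain ⟨t, ht⟩ := (isCompact_univ (X := Ultrafilter ℕ)).elim_finite_subcover U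
      (fun x => ultrafilter_isOpen_basic _) (by
        intro q _
        obtain ⟨r, hr⟩ := minimal_prop hp q
        rw [hr, ← uAdd_assoc, mem_uAdd] at hq₀
        obtain ⟨x, hx⟩ := Ultrafilter.nonempty_of_mem hq₀
        rw [Set.mem_iUnion]
        exact ⟨x, hx⟩)
    refine ⟨t.image (fun x : ℕ => (x : ℤ)), ?_⟩
    rintro B ⟨q, hq⟩
    have := ht (Set.mem_univ q)
    simp only [Set.mem_iUnion] at this
    obtain ⟨x, hxt, hx⟩ := this
    refine ⟨x, Finset.mem_image_of_mem _ hxt, q, ?_⟩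
    have hx' : {z : ℕ | ((x + z : ℕ) : ℤ) ∈ A} ∈ uAdd q p := hx
    refine Filter.mem_of_superset (Filter.inter_mem hq hx') ?_
    rintro z ⟨h1, h2⟩
    refine ⟨h1, ?_⟩
    have h2 : ((x + z : ℕ) : ℤ) ∈ A := h2
    push_cast at h2
    rwa [add_comm]

/-- Members of minimal idempotents are polynomial J-sets. -/
theorem poly_J {p : Ultrafilter ℕ} (hp : IsMinimalIdempotent p) {A : Set ℕ} (hA : A ∈ p)
    (F : Finset (ℕ → ℕ)) (T : Finset (ℕ → ℕ)) (hT : ∀ P ∈ T, IsPolyZeroConst P) (N : ℕ) :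
    ∃ (a : ℕ) (β : Finset ℕ), β.Nonempty ∧ (∀ t ∈ β, N < t) ∧
      ∀ f ∈ F, ∀ P ∈ T, a + P (∑ t ∈ β, f t) ∈ A := by
  classical
  choose! R hR0 hR using hT
  set M := (ℕ → ℕ) → ℕ
  set ev : (ℕ → ℕ) → M →+ ℤ := fun f =>
    (Nat.castAddMonoidHom ℤ).comp (Pi.evalAddMonoidHom (fun _ : ℕ → ℕ => ℕ) f) with hev
  set φ : (ℕ → ℕ) × (ℕ → ℕ) → M → ℤ := fun q z =>
    ((R q.2).map (Nat.castRingHom ℤ)).eval (ev q.1 z) with hφ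
  set D := T.sup (fun P => ((R P).map (Nat.castRingHom ℤ)).natDegree) with hD
  have hlarge : LargeP p {z : ℤ | ∃ n ∈ A, (n : ℤ) = z} := by
    refine ⟨p, ?_⟩
    have hpp : uAdd p p = p := hp.1
    rw [hpp]
    exact Filter.mem_of_superset hA fun n hn => ⟨n, hn, rfl⟩
  obtain ⟨β, hβ, hβN, q, hq⟩ := pet (largeP_fam hp) (M := M) (fun t f => f t) D
    (φ '' ((F : Set (ℕ → ℕ)) ×ˢ (T : Set (ℕ → ℕ))))
    (((Finset.finite_toSet F).prod (Finset.finite_toSet T)).image _) (by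
      rintro _ ⟨⟨f, P⟩, ⟨hf, hP⟩, rfl⟩
      refine W_mono (Finset.le_sup (f := fun P => ((R P).map (Nat.castRingHom ℤ)).natDegree) hP)
        (W_poly (ev f) _ ?_)
      rw [Polynomial.coeff_map, hR0 P hP]; simp) _ hlarge N
  obtain ⟨a, ha⟩ := Ultrafilter.nonempty_of_mem hq
  refine ⟨a, β, hβ, hβN, fun f hf P hP => ?_⟩
  obtain ⟨n, hn, hne⟩ := ha.2 (φ (f, P)) ⟨(f, P), ⟨hf, hP⟩, rfl⟩
  have hval : φ (f, P) (∑ t ∈ β, fun f => f t) = ((P (∑ t ∈ β, f t) : ℕ) : ℤ) := by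
    rw [hR P hP]
    simp only [hφ, hev]
    have : ((Nat.castAddMonoidHom ℤ).comp (Pi.evalAddMonoidHom (fun _ : ℕ → ℕ => ℕ) f))
      (∑ t ∈ β, fun f => f t) = Nat.castRingHom ℤ (∑ t ∈ β, f t) := by
      simp [Finset.sum_apply]
    rw [this, Polynomial.eval_map, Polynomial.eval₂_at_apply]
    simp
  rw [hval] at hne
  have : n = a + P (∑ t ∈ β, f t) := by exact_mod_cast hne
  rwa [← this]

end Ultra

end MultiCST
namespace MultiCST

section Assembly

/-- The star of a set with respect to an ultrafilter. -/
def star (p : Ultrafilter ℕ) (C : Set ℕ) : Set ℕ := {x | x ∈ C ∧ {y | x + y ∈ C} ∈ p}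

lemma star_mem {p : Ultrafilter ℕ} (hp : IdempotentUF p) {C : Set ℕ} (hC : C ∈ p) :
    star p C ∈ p := by
  have h : C ∈ uAdd p p := by rw [show uAdd p p = p from hp]; exact hC
  exact Filter.inter_mem hC h

lemma star_shift {p : Ultrafilter ℕ} (hp : IdempotentUF p) {C : Set ℕ} {x : ℕ}
    (hx : x ∈ star p C) : {y | x + y ∈ star p C} ∈ p := by
  refine Filter.mem_of_superset (star_mem hp hx.2) ?_
  rintro y ⟨h1, h2⟩
  refine ⟨h1, ?_⟩
  refine Filter.mem_of_superset h2 ?_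
  intro z hz
  have hz : x + (y + z) ∈ C := hz
  change x + y + z ∈ C
  rwa [add_assoc]

lemma tensor_sections (m : ℕ) (p : Fin m → Ultrafilter ℕ) (B : Set (Fin m → ℕ))
    (hB : B ∈ tensor m p) :
    ∃ C : Fin m → (Fin m → ℕ) → Set ℕ, (∀ l v, C l v ∈ p l) ∧
      (∀ l v v', (∀ i, i < l → v i = v' i) → C l v = C l v') ∧
      ∀ v, (∀ l, v l ∈ C l v) → v ∈ B := by
  classical
  induction m with
  | zero =>
    refine ⟨fun l => l.elim0, fun l => l.elim0, fun l => l.elim0, fun v _ => ?_⟩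
    have : (fun i : Fin 0 => i.elim0) ∈ B := hB
    convert this
  | succ m ih =>
    set E : ℕ → Set (Fin m → ℕ) := fun x => {w | (Fin.cons x w : Fin (m + 1) → ℕ) ∈ B} with hE
    set D : Set ℕ := {x | E x ∈ tensor m fun i => p i.succ} with hD
    have hDp : D ∈ p 0 := hB
    have hx : ∀ x, ∃ C : Fin m → (Fin m → ℕ) → Set ℕ, (∀ l v, C l v ∈ p l.succ) ∧
      (∀ l v v', (∀ i, i < l → v i = v' i) → C l v = C l v') ∧
      (x ∈ D → ∀ v, (∀ l, v l ∈ C l v) → v ∈ E x) := by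
      intro x
      by_cases hxD : x ∈ D
      · obtain ⟨C, h1, h2, h3⟩ := ih (fun i => p i.succ) (E x) hxD
        exact ⟨C, h1, h2, fun _ => h3⟩
      · exact ⟨fun _ _ => Set.univ, fun _ _ => Filter.univ_mem, fun _ _ _ _ => rfl,
          fun h => absurd h hxD⟩
    choose C h1 h2 h3 using hx
    refine ⟨fun l v => Fin.cases (motive := fun _ => Set ℕ) D (fun j => C (v 0) j (Fin.tail v)) l,
      ?_, ?_, ?_⟩
    · intro l v
      refine Fin.cases ?_ (fun j => ?_) l
      · exact hDp
      · exact h1 _ _ _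
    · intro l v v'
      refine Fin.cases ?_ (fun j => ?_) l
      · intro _; rfl
      · intro hag
        simp only [Fin.cases_succ]
        rw [hag 0 (Fin.succ_pos j)]
        apply h2
        intro i hi
        exact hag i.succ (Fin.succ_lt_succ_iff.mpr hi)
    · intro v hv
      have h0 : v 0 ∈ D := hv 0
      have := h3 (v 0) h0 (Fin.tail v) (fun l => hv l.succ)
      have h4 : (Fin.cons (v 0) (Fin.tail v) : Fin (m + 1) → ℕ) ∈ B := this
      rwa [Fin.cons_self_tail] at h4

lemma poly_shift {P : ℕ → ℕ} (hP : IsPolyZeroConst P) (y : ℕ) :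
    ∃ Q, IsPolyZeroConst Q ∧ ∀ z, P (y + z) = P y + Q z := by
  obtain ⟨R, _, hR⟩ := hP
  set R' := R.comp (Polynomial.X + Polynomial.C y) with hR'
  refine ⟨fun z => (R'.divX * Polynomial.X).eval z, ⟨R'.divX * Polynomial.X, by simp, fun _ => rfl⟩,
    fun z => ?_⟩
  have h0 : R'.coeff 0 = R.eval y := by
    rw [Polynomial.coeff_zero_eq_eval_zero, hR', Polynomial.eval_comp]; simp
  have h1 : R'.eval z = R.eval (y + z) := by
    rw [hR', Polynomial.eval_comp]; simp [add_comm]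
  rw [hR, hR, ← h1, ← h0]
  conv_lhs => rw [← Polynomial.divX_mul_X_add R']
  rw [Polynomial.eval_add, Polynomial.eval_C, add_comm]

lemma poly_zero {P : ℕ → ℕ} (hP : IsPolyZeroConst P) : P 0 = 0 := by
  obtain ⟨R, h0, hR⟩ := hP
  rw [hR, ← Polynomial.coeff_zero_eq_eval_zero, h0]

lemma poly_mono {P : ℕ → ℕ} (hP : IsPolyZeroConst P) : Monotone P := by
  intro a b hab
  obtain ⟨Q, _, hQ⟩ := poly_shift hP a
  have := hQ (b - a)
  rw [Nat.add_sub_cancel' hab] at this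
  omega

lemma step {m : ℕ} (p : Fin m → Ultrafilter ℕ) (C : Fin m → (Fin m → ℕ) → Set ℕ)
    (hC : ∀ l v, C l v ∈ p l) (T : Finset (ℕ → ℕ)) (hT : ∀ P ∈ T, IsPolyZeroConst P)
    (u : Ultrafilter ℕ) (hu : IsMinimalIdempotent u) (N K : ℕ) (G : Finset (ℕ → ℕ)) :
    ∃ (a : ℕ) (H : Finset ℕ), H.Nonempty ∧ (∀ t ∈ H, N < t) ∧
      ∀ l, p l = u → ∀ v : Fin m → ℕ, (∀ i, v i ≤ K) → ∀ f ∈ G, ∀ P ∈ T,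
        a + P (∑ t ∈ H, f t) ∈ star u (C l v) ∧
        ∀ x y, x ≤ N → y ≤ N → x + P y ∈ star u (C l v) →
          (x + a) + P (y + ∑ t ∈ H, f t) ∈ star u (C l v) := by
  classical
  set A : Set ℕ := {b | ∀ l, p l = u → ∀ v ∈ Set.Iic (fun _ : Fin m => K),
    b ∈ star u (C l v) ∧ ∀ x ∈ Set.Iic N, ∀ y ∈ Set.Iic N, ∀ P ∈ (T : Set (ℕ → ℕ)),
      x + P y ∈ star u (C l v) → x + P y + b ∈ star u (C l v)} with hA
  have hAu : ∀ᶠ b in (u : Filter ℕ), b ∈ A := by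
    simp only [hA, Set.mem_ofPred_eq]
    refine Filter.eventually_all.mpr fun l => Filter.eventually_imp_distrib_left.mpr fun hl =>
      (Filter.eventually_all_finite (Set.finite_Iic _)).mpr fun v _ => Filter.Eventually.and ?_ ?_
    · exact star_mem hu.1 (hl ▸ hC l v)
    · refine (Filter.eventually_all_finite (Set.finite_Iic _)).mpr fun x _ =>
        (Filter.eventually_all_finite (Set.finite_Iic _)).mpr fun y _ =>
        (Filter.eventually_all_finite (Finset.finite_toSet _)).mpr fun P _ =>
        Filter.eventually_imp_distrib_left.mpr fun h => star_shift hu.1 h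
  have hAu' : A ∈ u := hAu
  choose! Q hQ hQe using fun P hP => poly_shift (hT P hP)
  obtain ⟨a, H, hH, hHN, haH⟩ := poly_J hu hAu' G
    ((T ×ˢ Finset.range (N + 1)).image fun q => Q q.1 q.2) (by
      intro P' hP'
      obtain ⟨⟨P, y⟩, hq, rfl⟩ := Finset.mem_image.mp hP'
      exact hQ P (Finset.mem_product.mp hq).1 y) N
  refine ⟨a, H, hH, hHN, fun l hl v hv f hf P hP => ⟨?_, ?_⟩⟩
  · have := haH f hf (Q P 0) (Finset.mem_image.mpr ⟨(P, 0), by simp [hP], rfl⟩)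
    have h2 := (this l hl v hv).1
    have h3 := hQe P hP 0 (∑ t ∈ H, f t)
    rw [poly_zero (hT P hP), zero_add, zero_add] at h3
    rwa [h3]
  · intro x y hx hy hxy
    have := haH f hf (Q P y) (Finset.mem_image.mpr ⟨(P, y), by simp [hP]; omega, rfl⟩)
    have h2 := (this l hl v hv).2 x hx y hy P hP hxy
    rw [hQe P hP y]
    convert h2 using 1; ring

theorem main_aux (m : ℕ) (h : (Fin m → ℕ) → ℕ)
    (p : Fin m → Ultrafilter ℕ) (hp : ∀ i, IsMinimalIdempotent (p i))
    (A : Set ℕ) (hA : A ∈ (tensor m p).map h)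
    (T : Finset (ℕ → ℕ)) (hTP : ∀ P ∈ T, IsPolyZeroConst P) :
    ∃ (α : Ultrafilter ℕ → Finset (ℕ → ℕ) → ℕ) (H : Ultrafilter ℕ → Finset (ℕ → ℕ) → Finset ℕ),
      GoodWitness m h A T (fun l => α (p l)) (fun l => H (p l)) := by
  classical
  obtain ⟨C, hC, hCdep, hCB⟩ := tensor_sections m p (h ⁻¹' A) hA
  set Wd : ℕ → ℕ := fun N => N + ∑ P ∈ T, P N with hWd
  have hst := fun u hu N G => step p C hC T hTP u hu N (Wd N) G
  choose! a H hHne hHN hstep using hst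
  set stuff : Finset (ℕ → ℕ) → ℕ → ℕ := fun F n => ∑ l, (a (p l) n F + (H (p l) n F).sup id +
    ∑ f ∈ F, ∑ t ∈ H (p l) n F, f t) with hstuff
  obtain ⟨bd, hbd⟩ : ∃ bd : Finset (ℕ → ℕ) → ℕ, ∀ F, bd F = ∑ E ∈ F.ssubsets, stuff E (bd E) := by
    refine ⟨Finset.strongInduction (fun F ih => ∑ E ∈ F.ssubsets.attach,
      stuff E.1 (ih E.1 (Finset.mem_ssubsets.1 E.2))), fun F => ?_⟩
    rw [Finset.strongInduction_eq, Finset.sum_attach F.ssubsets (fun E => stuff E _)]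
  have hle : ∀ F n l, a (p l) n F + (H (p l) n F).sup id +
      ∑ f ∈ F, ∑ t ∈ H (p l) n F, f t ≤ stuff F n := by
    intro F n l
    exact Finset.single_le_sum (f := fun l => a (p l) n F + (H (p l) n F).sup id +
      ∑ f ∈ F, ∑ t ∈ H (p l) n F, f t) (fun _ _ => Nat.zero_le _) (Finset.mem_univ l)
  refine ⟨fun u F => a u (bd F) F, fun u F => H u (bd F) F, ?_, ?_, ?_⟩
  · intro j F _
    exact hHne _ (hp j) _ _
  · intro j F G _ hFG x hx y hy
    have h1 : x ≤ (H (p j) (bd F) F).sup id := Finset.le_sup (f := id) hx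
    have h2 := hle F (bd F) j
    have h3 : stuff F (bd F) ≤ bd G := by
      rw [hbd G]
      exact Finset.single_le_sum (f := fun E => stuff E (bd E)) (fun _ _ => Nat.zero_le _)
        (Finset.mem_ssubsets.mpr hFG)
    have h4 := hHN _ (hp j) _ _ y hy
    omega
  · intro G hGne hG f hf β hβ hβlt P hP
    have hinj : Function.Injective G := by
      intro i j hij
      rcases lt_trichotomy i j with hlt | heq | hlt
      · exact absurd hij (hG _ _ hlt).ne
      · exact heq
      · exact absurd hij.symm (hG _ _ hlt).ne
    have hbound : ∀ (n : ℕ) (b : Finset ℕ) (c : ℕ → ℕ), (∀ i ∈ b, i < n) →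
        (∀ i, c i ≤ stuff (G i) (bd (G i))) → ∑ i ∈ b, c i ≤ bd (G n) := by
      intro n b c hb hc
      calc ∑ i ∈ b, c i ≤ ∑ i ∈ b, stuff (G i) (bd (G i)) := Finset.sum_le_sum fun i _ => hc i
        _ = ∑ E ∈ b.image G, stuff E (bd E) := (Finset.sum_image (f := fun E => stuff E (bd E)) (fun _ _ _ _ e => hinj e)).symm
        _ ≤ ∑ E ∈ (G n).ssubsets, stuff E (bd E) := by
            apply Finset.sum_le_sum_of_subset
            intro E hE
            obtain ⟨i, hi, rfl⟩ := Finset.mem_image.mp hE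
            exact Finset.mem_ssubsets.mpr (hG _ _ (hb i hi))
        _ = bd (G n) := (hbd _).symm
    have hba : ∀ l n (b : Finset ℕ), (∀ i ∈ b, i < n) →
        ∑ i ∈ b, a (p l) (bd (G i)) (G i) ≤ bd (G n) := by
      intro l n b hb
      apply hbound n b _ hb
      intro i
      have := hle (G i) (bd (G i)) l
      omega
    have hbf : ∀ l n (b : Finset ℕ), (∀ i ∈ b, i < n) →
        ∑ i ∈ b, ∑ t ∈ H (p l) (bd (G i)) (G i), f i t ≤ bd (G n) := by
      intro l n b hb
      apply hbound n b _ hb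
      intro i
      have h1 := hle (G i) (bd (G i)) l
      have h2 := Finset.single_le_sum (f := fun g : ℕ → ℕ => ∑ t ∈ H (p l) (bd (G i)) (G i), g t)
        (fun _ _ => Nat.zero_le _) (hf i)
      omega
    set v : Fin m → ℕ := fun l => (∑ i ∈ β l, a (p l) (bd (G i)) (G i)) +
      P l (∑ i ∈ β l, ∑ t ∈ H (p l) (bd (G i)) (G i), f i t) with hv
    change v ∈ h ⁻¹' A
    apply hCB
    intro l
    set v0 : Fin m → ℕ := fun i => if i < l then v i else 0 with hv0
    rw [hCdep l v v0 (fun i hi => by simp [hv0, hi])]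
    have hv0le : ∀ n, (∀ i, i < l → ∀ t ∈ β i, t < n) → ∀ i, v0 i ≤ Wd (bd (G n)) := by
      intro n hn i
      by_cases hi : i < l
      · simp only [hv0, hi, if_true, hv, hWd]
        have h1 := hba i n (β i) (hn i hi)
        have h2 := poly_mono (hTP _ (hP i)) (hbf i n (β i) (hn i hi))
        have h3 := Finset.single_le_sum (f := fun Q : ℕ → ℕ => Q (bd (G n)))
          (fun _ _ => Nat.zero_le _) (hP i)
        omega
      · simp [hv0, hi]
    have key : ∀ b : Finset ℕ, (∀ i, i < l → ∀ t ∈ β i, ∀ s ∈ b, t < s) → b.Nonempty →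
        (∑ i ∈ b, a (p l) (bd (G i)) (G i)) +
          P l (∑ i ∈ b, ∑ t ∈ H (p l) (bd (G i)) (G i), f i t) ∈ star (p l) (C l v0) := by
      intro b
      induction b using Finset.induction_on_max with
      | empty => intro _ h; exact absurd h (by simp)
      | insert n b hb ih =>
        intro hlt _
        have hnb : n ∉ b := fun hn => lt_irrefl _ (hb n hn)
        have hs := hstep (p l) (hp l) (bd (G n)) (G n) l rfl v0
          (hv0le n fun i hi t ht => hlt i hi t ht n (Finset.mem_insert_self _ _))
          (f n) (hf n) (P l) (hP l)
        rcases b.eq_empty_or_nonempty with rfl | hbne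
        · simpa using hs.1
        · have := hs.2 _ _ (hba l n b hb) (hbf l n b hb)
            (ih (fun i hi t ht s hs => hlt i hi t ht s (Finset.mem_insert_of_mem hs)) hbne)
          rw [Finset.sum_insert hnb, Finset.sum_insert hnb]
          rw [add_comm (a (p l) (bd (G n)) (G n)),
            add_comm (∑ t ∈ H (p l) (bd (G n)) (G n), f n t)]
          exact this
    exact (key (β l) (fun i hi t ht s hs => hβlt i l hi t ht s hs) (hβ l)).1

end Assembly

/-- Multidimensional stronger polynomial central sets theorem composed with a polynomial
`h : ℕ^m → ℕ` with no constant term; moreover when all the minimal idempotents coincide, the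
witnessing functions may be chosen to coincide. -/
theorem polynomial_image_stronger_polynomial_CST (m : ℕ) (hm : 1 ≤ m)
    (h : (Fin m → ℕ) → ℕ)
    (hh : ∃ Q : MvPolynomial (Fin m) ℕ,
      MvPolynomial.coeff 0 Q = 0 ∧ ∀ v, h v = MvPolynomial.eval v Q)
    (p : Fin m → Ultrafilter ℕ) (hp : ∀ i, IsMinimalIdempotent (p i))
    (A : Set ℕ) (hA : A ∈ (tensor m p).map h)
    (T : Finset (ℕ → ℕ)) (hT : T.Nonempty) (hTP : ∀ P ∈ T, IsPolyZeroConst P) :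
    (∃ (α : Fin m → Finset (ℕ → ℕ) → ℕ) (H : Fin m → Finset (ℕ → ℕ) → Finset ℕ),
      GoodWitness m h A T α H) ∧
    ((∀ i j : Fin m, p i = p j) →
      ∃ (α : Fin m → Finset (ℕ → ℕ) → ℕ) (H : Fin m → Finset (ℕ → ℕ) → Finset ℕ),
        (∀ i j : Fin m, α i = α j) ∧ (∀ i j : Fin m, H i = H j) ∧
        GoodWitness m h A T α H) := by
  obtain ⟨α, H, hg⟩ := main_aux m h p hp A hA T hTP
  exact ⟨⟨_, _, hg⟩, fun hpp => ⟨fun l => α (p l), fun l => H (p l),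
    fun i j => by simp only [hpp i j], fun i j => by simp only [hpp i j], hg⟩⟩

end MultiCST
end

section
/- Let T ∈ 𝒫_f(ℙ). Then the following two statements are equivalent. (1) For all r, m ∈ ℕ with r, m ≥ 1 and every partition ℕ^m = C₁ ∪ ⋯ ∪ C_r, there exist j ∈ {1,…,r} and functions α₁,…,α_m : 𝒫_f(ℕ^ℕ) → ℕ and H₁,…,H_m : 𝒫_f(ℕ^ℕ) → 𝒫_f(ℕ) such that (a) whenever F ⊊ G in 𝒫_f(ℕ^ℕ), max H_l(F) < min H_l(G) for every l ∈ {1,…,m}, and (b) whenever G₁ ⊊ G₂ ⊊ ⋯ is an infinite strictly increasing chain in 𝒫_f(ℕ^ℕ), f_i ∈ G_i for each i ∈ ℕ, P₁,…,P_m ∈ T, and β₁ < ⋯ < β_m are in 𝒫_f(ℕ), then (Σ_{i∈β₁}α₁(G_i) + P₁(Σ_{i∈β₁}Σ_{t∈H₁(G_i)}f_i(t)), …, Σ_{i∈β_m}α_m(G_i) + P_m(Σ_{i∈β_m}Σ_{t∈H_m(G_i)}f_i(t))) ∈ C_j. (2) For all r, m ∈ ℕ with r, m ≥ 1, all a₁,…,a_m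 ∈ ℕ, and every partition ℕ = D₁ ∪ ⋯ ∪ D_r, there exist j ∈ {1,…,r} and functions α₁,…,α_m, H₁,…,H_m as above satisfying (a) and such that for every infinite strictly increasing chain G₁ ⊊ G₂ ⊊ ⋯ in 𝒫_f(ℕ^ℕ), all f_i ∈ G_i, all P₁,…,P_m ∈ T, and all β₁ < ⋯ < β_m in 𝒫_f(ℕ), one has Σ_{l=1}^m a_l·(Σ_{i∈β_l}α_l(G_i) + P_l(Σ_{i∈β_l}Σ_{t∈H_l(G_i)}f_i(t))) ∈ D_j. -/
namespace MultiCST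

section PolyVdW
variable {V : Type} [AddCommGroup V]

/-- Polynomial maps of degree at most `d` vanishing at zero. -/
def PD : ℕ → (V → ℤ) → Prop
  | 0, φ => ∀ x, φ x = 0
  | d + 1, φ => φ 0 = 0 ∧ ∀ u, PD d (fun x => φ (x + u) - φ u - φ x)

/-- The shift of a map, normalized at zero. -/
def shiftMap (u : V) (φ : V → ℤ) : V → ℤ := fun x => φ (x + u) - φ u

theorem PD.sub {d : ℕ} : ∀ {φ ψ : V → ℤ}, PD d φ → PD d ψ → PD d (φ - ψ) := by
  induction d with
  | zero => intro φ ψ h1 h2 x; simp [h1 x, h2 x]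
  | succ d ih =>
    intro φ ψ h1 h2
    refine ⟨by simp [h1.1, h2.1], fun u => ?_⟩
    have := ih (h1.2 u) (h2.2 u)
    convert this using 1
    funext x
    simp only [Pi.sub_apply]
    ring

theorem PD.zero (d : ℕ) : PD d (0 : V → ℤ) := by
  induction d with
  | zero => intro x; rfl
  | succ d ih =>
    refine ⟨rfl, fun u => ?_⟩
    convert ih using 1
    funext x; simp

theorem PD.add {d : ℕ} {φ ψ : V → ℤ} (h1 : PD d φ) (h2 : PD d ψ) : PD d (φ + ψ) := by
  have := h1.sub ((PD.zero d).sub h2)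
  simpa using this

theorem PD.succ {d : ℕ} : ∀ {φ : V → ℤ}, PD d φ → PD (d + 1) φ := by
  induction d with
  | zero =>
    intro φ h
    exact ⟨h 0, fun u x => by simp [h _]⟩
  | succ d ih => intro φ h; exact ⟨h.1, fun u => ih (h.2 u)⟩

theorem PD.mono {d e : ℕ} (h : d ≤ e) {φ : V → ℤ} (hφ : PD d φ) : PD e φ := by
  induction h with
  | refl => exact hφ
  | step _ ih => exact ih.succ

theorem PD.shift_sub {d : ℕ} {φ : V → ℤ} (h : PD (d + 1) φ) (u : V) :
    PD d (shiftMap u φ - φ) := h.2 u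

variable (g : ℕ → V)

/-- The finitary monochromaticity statement for a family of maps. -/
def Mono (S : Set (V → ℤ)) : Prop :=
  ∀ (κ : Type) [Finite κ] (n : ℕ), ∃ (M : Finset ℤ) (K : Finset (Finset ℕ)),
    (∀ H ∈ K, H.Nonempty ∧ ∀ t ∈ H, n < t) ∧
    ∀ χ : ℤ → κ, ∃ a ∈ M, ∃ H ∈ K, ∃ c, ∀ φ ∈ S, χ (a + φ (∑ t ∈ H, g t)) = c

variable {g}

theorem Mono.anti {S S' : Set (V → ℤ)} (h : Mono g S) (hs : S' ⊆ S) : Mono g S' := by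
  intro κ _ n
  obtain ⟨M, K, h1, h2⟩ := h κ n
  refine ⟨M, K, h1, fun χ => ?_⟩
  obtain ⟨a, ha, H, hH, c, hc⟩ := h2 χ
  exact ⟨a, ha, H, hH, c, fun φ hφ => hc φ (hs hφ)⟩

theorem Mono.translate {S : Set (V → ℤ)} (ψ : V → ℤ)
    (h : Mono g ((fun φ => φ - ψ) '' S)) : Mono g S := by
  classical
  intro κ _ n
  obtain ⟨M, K, h1, h2⟩ := h κ n
  refine ⟨Finset.image₂ (fun a H => a - ψ (∑ t ∈ H, g t)) M K, K, h1, fun χ => ?_⟩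
  obtain ⟨a, ha, H, hH, c, hc⟩ := h2 χ
  refine ⟨_, Finset.mem_image₂_of_mem ha hH, H, hH, c, fun φ hφ => ?_⟩
  have := hc _ (Set.mem_image_of_mem _ hφ)
  rw [← this]
  congr 1
  simp only [Pi.sub_apply]
  ring

theorem mono_empty : Mono g (∅ : Set (V → ℤ)) := by
  intro κ _ n
  refine ⟨{0}, {{n + 1}}, by simp, fun χ => ?_⟩
  exact ⟨0, by simp, {n + 1}, by simp, χ 0, by simp⟩

/-- Colour focusing. -/
theorem focus {R : Set (V → ℤ)} (hR : R.Finite) (hR0 : ∀ φ ∈ R, φ 0 = 0)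
    (hmono : ∀ U : Set V, U.Finite → Mono g (Set.image2 shiftMap U R)) :
    Mono g (insert 0 R) := by
  classical
  intro κ _ n
  have : Fintype κ := Fintype.ofFinite κ
  rcases R.eq_empty_or_nonempty with rfl | ⟨φ₀, hφ₀⟩
  · refine ⟨{0}, {{n + 1}}, by simp, fun χ => ?_⟩
    exact ⟨0, by simp, {n + 1}, by simp, χ 0, by simp⟩
  have key : ∀ s : ℕ, ∃ (M : Finset ℤ) (K : Finset (Finset ℕ)),
    (∀ H ∈ K, H.Nonempty ∧ ∀ t ∈ H, n < t) ∧
    ∀ χ : ℤ → κ, ∃ a ∈ M, (∃ H ∈ K, ∀ φ ∈ R, χ (a + φ (∑ t ∈ H, g t)) = χ a) ∨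
      ∃ C : Finset κ, C.card = s ∧ ∀ c ∈ C, ∃ H ∈ K, ∀ φ ∈ R, χ (a + φ (∑ t ∈ H, g t)) = c := by
    intro s
    induction s with
    | zero => exact ⟨{0}, ∅, by simp, fun χ => ⟨0, by simp, Or.inr ⟨∅, by simp⟩⟩⟩
    | succ s ih =>
      obtain ⟨M, K, hK, hM⟩ := ih
      set U : Set V := insert 0 ((fun H : Finset ℕ => ∑ t ∈ H, g t) '' (K : Set (Finset ℕ)))
        with hU
      have hUf : U.Finite := (K.finite_toSet.image _).insert _
      set Ω : Set ℤ := (M : Set ℤ) ∪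
        Set.image2 (fun a b => a + b) (M : Set ℤ) (Set.image2 (fun φ u => φ u) R U) with hΩ
      have hΩf : Ω.Finite :=
        M.finite_toSet.union (M.finite_toSet.image2 _ (hR.image2 _ hUf))
      have : Finite Ω := hΩf
      obtain ⟨M', K', hK', hM'⟩ := hmono U hUf (Ω → κ) (max n ((K.biUnion id).sup id))
      have hlt : ∀ H ∈ K, ∀ H' ∈ K', Disjoint H H' := by
        intro H hH H' hH'
        rw [Finset.disjoint_left]
        intro t ht ht'
        have h1 := (hK' H' hH').2 t ht'
        have h2 : t ≤ (K.biUnion id).sup id :=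
          Finset.le_sup (f := id) (Finset.mem_biUnion.2 ⟨H, hH, ht⟩)
        have := le_max_right n ((K.biUnion id).sup id)
        omega
      refine ⟨Finset.image₂ (fun a b => a + b) M' M ∪
        Finset.image₂ (fun x a => x + a)
          (Finset.image₂ (fun b H => b + φ₀ (∑ t ∈ H, g t)) M' K') M,
        K ∪ (K' ∪ Finset.image₂ (fun H H' => H ∪ H') K K'), ?_, ?_⟩
      · have hK'' : ∀ H ∈ K', H.Nonempty ∧ ∀ t ∈ H, n < t := fun H hH =>
          ⟨(hK' H hH).1, fun t ht => lt_of_le_of_lt (le_max_left _ _) ((hK' H hH).2 t ht)⟩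
        intro H hH
        simp only [Finset.mem_union, Finset.mem_image₂] at hH
        rcases hH with hH | hH | ⟨H1, hH1, H2, hH2, rfl⟩
        · exact hK H hH
        · exact hK'' H hH
        · refine ⟨(hK H1 hH1).1.inl, fun t ht => ?_⟩
          rcases Finset.mem_union.1 ht with ht | ht
          · exact (hK H1 hH1).2 t ht
          · exact (hK'' H2 hH2).2 t ht
      · intro χ
        obtain ⟨b, hb, L, hL, c', hc'⟩ := hM' (fun x w => χ (x + w))
        set k := ∑ t ∈ L, g t with hk
        have h0U : (0 : V) ∈ U := Set.mem_insert _ _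
        set c'' : ℤ → κ := fun w => χ (b + φ₀ k + w) with hc''
        have e0 : ∀ φ ∈ R, ∀ u ∈ U, ∀ w ∈ Ω, χ (b + (φ (k + u) - φ u) + w) =
            χ (b + φ₀ k + w) := by
          intro φ hφ u hu w hw
          have h1 := congrFun (hc' _ (Set.mem_image2_of_mem hu hφ)) ⟨w, hw⟩
          have h2 := congrFun (hc' _ (Set.mem_image2_of_mem h0U hφ₀)) ⟨w, hw⟩
          have h3 := h1.trans h2.symm
          simpa [shiftMap, hR0 φ₀ hφ₀] using h3
        have memx : ∀ a ∈ M, b + φ₀ k + a ∈ Finset.image₂ (fun a b => a + b) M' M ∪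
            Finset.image₂ (fun x a => x + a)
              (Finset.image₂ (fun b H => b + φ₀ (∑ t ∈ H, g t)) M' K') M := fun a ha =>
          Finset.mem_union_right _ (Finset.mem_image₂_of_mem
            (Finset.mem_image₂_of_mem (f := fun b H => b + φ₀ (∑ t ∈ H, g t)) hb hL) ha)
        have memb : ∀ a ∈ M, b + a ∈ Finset.image₂ (fun a b => a + b) M' M ∪
            Finset.image₂ (fun x a => x + a)
              (Finset.image₂ (fun b H => b + φ₀ (∑ t ∈ H, g t)) M' K') M := fun a ha =>
          Finset.mem_union_left _ (Finset.mem_image₂_of_mem hb ha)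
        obtain ⟨a, ha, h⟩ := hM c''
        rcases h with ⟨H, hH, h⟩ | ⟨C, hC, h⟩
        · refine ⟨_, memx a ha, Or.inl ⟨H, Finset.mem_union_left _ hH, fun φ hφ => ?_⟩⟩
          have := h φ hφ
          simpa [hc'', add_assoc] using this
        by_cases hcC : c'' a ∈ C
        · obtain ⟨H, hH, h⟩ := h _ hcC
          refine ⟨_, memx a ha, Or.inl ⟨H, Finset.mem_union_left _ hH, fun φ hφ => ?_⟩⟩
          have := h φ hφ
          simpa [hc'', add_assoc] using this
        · refine ⟨_, memb a ha, Or.inr ⟨insert (c'' a) C, ?_, ?_⟩⟩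
          · rw [Finset.card_insert_of_notMem hcC, hC]
          · intro c hc
            rcases Finset.mem_insert.1 hc with rfl | hc
            · refine ⟨L, by simp [hL], fun φ hφ => ?_⟩
              have h1 := e0 φ hφ 0 h0U a (Or.inl ha)
              rw [hc'']
              simp only
              rw [← h1, ← hk]
              congr 1
              rw [hR0 φ hφ, add_zero]
              ring
            · obtain ⟨H, hH, h⟩ := h _ hc
              refine ⟨H ∪ L, ?_, fun φ hφ => ?_⟩
              · exact Finset.mem_union_right _ (Finset.mem_union_right _
                  (Finset.mem_image₂_of_mem hH hL))
              · have hu : (∑ t ∈ H, g t) ∈ U := Or.inr ⟨H, hH, rfl⟩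
                have h1 := e0 φ hφ _ hu (a + φ (∑ t ∈ H, g t))
                  (Or.inr (Set.mem_image2_of_mem ha (Set.mem_image2_of_mem hφ hu)))
                have h2 := h φ hφ
                rw [Finset.sum_union (hlt H hH L hL), ← hk, ← h2, hc'']
                simp only
                rw [← h1, add_comm (∑ t ∈ H, g t) k]
                congr 1
                ring
  obtain ⟨M, K, hK, hM⟩ := key (Fintype.card κ + 1)
  refine ⟨M, K, hK, fun χ => ?_⟩
  obtain ⟨a, ha, h⟩ := hM χ
  rcases h with ⟨H, hH, h⟩ | ⟨C, hC, -⟩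
  · refine ⟨a, ha, H, hH, χ a, ?_⟩
    rintro φ (rfl | hφ)
    · simp
    · exact h φ hφ
  · have := C.card_le_univ
    omega

theorem pet_s13 (d : ℕ) : ∀ 𝓡 : Set (Set (V → ℤ)), (∀ R ∈ 𝓡, R.Finite) →
    (∀ R ∈ 𝓡, ∀ φ ∈ R, φ 0 = 0) →
    (∀ R ∈ 𝓡, ∀ U : Set V, U.Finite → Set.image2 shiftMap U R ∈ 𝓡) →
    (∀ R ∈ 𝓡, ∀ ψ, PD d ψ → (fun φ => φ - ψ) '' R ∈ 𝓡) →
    (∀ R ∈ 𝓡, Mono g R) →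
    ∀ R ∈ 𝓡, ∀ S : Set (V → ℤ), S.Finite → (∀ φ ∈ S, PD d φ) → Mono g (S ∪ R) := by
  induction d with
  | zero =>
    intro 𝓡 hfin hz hsh _ hm R hR S hS hSd
    refine (focus (hfin R hR) (hz R hR) (fun U hU => hm _ (hsh R hR U hU))).anti ?_
    rintro φ (hφ | hφ)
    · left
      funext x
      exact hSd φ hφ x
    · exact Or.inr hφ
  | succ d ih =>
    intro 𝓡 hfin hz hsh htr hm
    have PD0 : ∀ {e : ℕ} {φ : V → ℤ}, PD e φ → φ 0 = 0 := by
      intro e φ h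
      cases e with
      | zero => exact h 0
      | succ e => exact h.1
    have main : ∀ k : ℕ, ∀ Q : List (V → ℤ), Q.length = k → (∀ q ∈ Q, PD (d + 1) q) →
        ∀ R ∈ 𝓡, ∀ S : Set (V → ℤ), S.Finite → (∀ φ ∈ S, ∃ q ∈ Q, PD d (φ - q)) →
        Mono g (S ∪ R) := by
      intro k
      induction k with
      | zero =>
        intro Q hQ _ R hR S _ hS
        refine (hm R hR).anti ?_
        rintro φ (hφ | hφ)
        · obtain ⟨q, hq, -⟩ := hS φ hφ
          rw [List.length_eq_zero_iff] at hQ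
          simp [hQ] at hq
        · exact hφ
      | succ k ihk =>
        intro Q hQ hQd R hR S hSf hS
        match Q, hQ with
        | q :: Q', hQ =>
        have hqd : PD (d + 1) q := hQd q (by simp)
        apply Mono.translate q
        have hQ'd : ∀ q' ∈ Q'.map (fun x => x - q), PD (d + 1) q' := by
          intro q' hq'
          obtain ⟨x, hx, rfl⟩ := List.mem_map.1 hq'
          exact (hQd x (by simp [hx])).sub hqd
        have hlen : (Q'.map (fun x => x - q)).length = k := by simpa using hQ
        have key := ih {X | ∃ S R, S.Finite ∧ R ∈ 𝓡 ∧ X = S ∪ R ∧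
            ∀ φ ∈ S, ∃ q' ∈ Q'.map (fun x => x - q), PD d (φ - q')} ?_ ?_ ?_ ?_ ?_
        · have := key ({φ ∈ (fun φ => φ - q) '' S | ¬ PD d φ} ∪ (fun φ => φ - q) '' R)
            ⟨_, _, (hSf.image _).subset (Set.sep_subset _ _), htr R hR q hqd, rfl, ?_⟩
            {φ ∈ (fun φ => φ - q) '' S | PD d φ} ((hSf.image _).subset (Set.sep_subset _ _))
            (fun φ hφ => hφ.2)
          · refine this.anti ?_
            rw [Set.image_union]
            rintro φ (hφ | hφ)
            · by_cases h : PD d φ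
              · exact Or.inl ⟨hφ, h⟩
              · exact Or.inr (Or.inl ⟨hφ, h⟩)
            · exact Or.inr (Or.inr hφ)
          · rintro _ ⟨⟨φ, hφ, rfl⟩, hnd⟩
            obtain ⟨q', hq', h⟩ := hS φ hφ
            rcases List.mem_cons.1 hq' with rfl | hq'
            · exact absurd h hnd
            · exact ⟨q' - q, List.mem_map.2 ⟨q', hq', rfl⟩, by simpa using h⟩
        · rintro _ ⟨S, R, hS, hR, rfl, _⟩
          exact hS.union (hfin R hR)
        · rintro _ ⟨S, R, hS, hR, rfl, h⟩ φ (hφ | hφ)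
          · obtain ⟨q', hq', h⟩ := h φ hφ
            have h1 := PD0 h
            have h2 := PD0 (hQ'd q' hq')
            simp only [Pi.sub_apply] at h1
            omega
          · exact hz R hR φ hφ
        · rintro _ ⟨S, R, hS, hR, rfl, h⟩ U hU
          refine ⟨Set.image2 shiftMap U S, _, hU.image2 _ hS, hsh R hR U hU,
            Set.image2_union_right, ?_⟩
          rintro _ ⟨u, hu, φ, hφ, rfl⟩
          obtain ⟨q', hq', h⟩ := h φ hφ
          refine ⟨q', hq', ?_⟩
          have hφd : PD (d + 1) φ := by simpa using h.succ.add (hQ'd q' hq')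
          simpa using (hφd.shift_sub u).add h
        · rintro _ ⟨S, R, hS, hR, rfl, h⟩ ψ hψ
          refine ⟨(fun φ => φ - ψ) '' S, _, hS.image _, htr R hR ψ hψ.succ,
            Set.image_union _ _ _, ?_⟩
          rintro _ ⟨φ, hφ, rfl⟩
          obtain ⟨q', hq', h⟩ := h φ hφ
          refine ⟨q', hq', ?_⟩
          have := h.sub hψ
          rwa [sub_right_comm] at this
        · rintro _ ⟨S, R, hS, hR, rfl, h⟩
          exact ihk _ hlen hQ'd R hR S hS h
    intro R hR S hS hSd
    refine main _ hS.toFinset.toList rfl (by simpa using hSd) R hR S hS ?_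
    intro φ hφ
    exact ⟨φ, by simpa using hφ, by simpa using PD.zero d⟩

theorem mono_all (g : ℕ → V) (d : ℕ) (S : Set (V → ℤ)) (hS : S.Finite)
    (hd : ∀ φ ∈ S, PD d φ) : Mono g S := by
  have := pet_s13 (g := g) d {∅} (by simp) (by simp) (by simp) (by simp)
    (by simpa using mono_empty) ∅ rfl S hS hd
  simpa using this

end PolyVdW

/-- Integer polynomials without constant term, precomposed with a coordinate. -/
theorem pd_poly {V : Type} [AddCommGroup V] (π : V →+ ℤ) (d : ℕ) :
    ∀ P : Polynomial ℤ, P.coeff 0 = 0 → P.natDegree ≤ d → PD d (fun v => P.eval (π v)) := by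
  induction d with
  | zero =>
    intro P h0 hd x
    rw [Polynomial.eq_C_of_natDegree_le_zero hd, h0]
    simp
  | succ d ih =>
    intro P h0 hd
    have hP0 : P.eval 0 = 0 := by rw [← Polynomial.coeff_zero_eq_eval_zero, h0]
    refine ⟨by simpa using hP0, fun u => ?_⟩
    have := ih (Polynomial.taylor (π u) P - P - Polynomial.C (P.eval (π u))) ?_ ?_
    · convert this using 1
      funext x
      simp [Polynomial.taylor_eval]
      ring
    · simp [Polynomial.taylor_coeff_zero, h0]
    · have hlt : (Polynomial.taylor (π u) P - P).natDegree ≤ d := by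
        by_cases hz : P.natDegree = 0
        · rw [Polynomial.eq_C_of_natDegree_eq_zero hz, h0]
          simp
        have h1 : (Polynomial.taylor (π u) P - P).degree < P.degree := by
          have hPne : P ≠ 0 := by rintro rfl; simp at hz
          have hne : Polynomial.taylor (π u) P ≠ 0 := by
            intro h
            have := Polynomial.natDegree_taylor P (π u)
            rw [h] at this
            simp at this
            omega
          have := Polynomial.degree_sub_lt_left (p := Polynomial.taylor (π u) P) (q := P)
            (by simp) hne (by simp)
          simpa using this
        by_cases hz2 : Polynomial.taylor (π u) P - P = 0
        · simp [hz2]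
        have := Polynomial.natDegree_lt_natDegree hz2 h1
        omega
      refine (Polynomial.natDegree_sub_le _ _).trans ?_
      simp [hlt]

/-- Polynomial J-sets. -/
def PJ (A : Set ℕ) : Prop :=
  ∀ (S : Finset (Polynomial ℕ)) (F : Finset (ℕ → ℕ)) (n : ℕ), (∀ P ∈ S, P.coeff 0 = 0) →
    ∃ (a : ℕ) (H : Finset ℕ), H.Nonempty ∧ (∀ t ∈ H, n < t) ∧
      ∀ P ∈ S, ∀ f ∈ F, a + P.eval (∑ t ∈ H, f t) ∈ A

theorem coloring {κ : Type} [Finite κ] (χ : ℕ → κ) (S : Finset (Polynomial ℕ))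
    (F : Finset (ℕ → ℕ)) (n : ℕ) (hS : ∀ P ∈ S, P.coeff 0 = 0) :
    ∃ (c : κ) (a : ℕ) (H : Finset ℕ), H.Nonempty ∧ (∀ t ∈ H, n < t) ∧
      ∀ P ∈ S, ∀ f ∈ F, χ (a + P.eval (∑ t ∈ H, f t)) = c := by
  classical
  let Φ : Polynomial ℕ → (ℕ → ℕ) → (((ℕ → ℕ) → ℤ) → ℤ) :=
    fun P f v => (P.map (Nat.castRingHom ℤ)).eval (v f)
  have hm := mono_all (V := (ℕ → ℕ) → ℤ) (fun t f => (f t : ℤ)) (S.sup Polynomial.natDegree)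
    (Set.image2 Φ (S : Set (Polynomial ℕ)) (F : Set (ℕ → ℕ)))
    (S.finite_toSet.image2 _ F.finite_toSet) (by
      rintro _ ⟨P, hP, f, hf, rfl⟩
      refine pd_poly (Pi.evalAddMonoidHom (fun _ : ℕ → ℕ => ℤ) f) _ _ ?_ ?_
      · simp [hS P hP]
      · exact Polynomial.natDegree_map_le.trans (Finset.le_sup (f := Polynomial.natDegree) hP))
  obtain ⟨M, K, hK, h⟩ := hm κ n
  obtain ⟨m0, hm0⟩ : ∃ m0 : ℕ, ∀ a ∈ M, 0 ≤ a + m0 := by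
    refine ⟨M.sup Int.natAbs, fun a ha => ?_⟩
    have := Finset.le_sup (f := Int.natAbs) ha
    omega
  obtain ⟨a, ha, H, hH, c, hc⟩ := h (fun x => χ (x + m0).toNat)
  refine ⟨c, (a + m0).toNat, H, (hK H hH).1, (hK H hH).2, fun P hP f hf => ?_⟩
  rw [← hc _ (Set.mem_image2_of_mem hP hf)]
  congr 1
  have e : Φ P f (∑ t ∈ H, fun f => (f t : ℤ)) = ((P.eval (∑ t ∈ H, f t) : ℕ) : ℤ) := by
    simp only [Φ, Finset.sum_apply]
    rw [← Nat.cast_sum, Polynomial.eval_natCast_map]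
    rfl
  simp only [e]
  have := hm0 a ha
  omega

theorem pj_cell {κ : Type} [Finite κ] (χ : ℕ → κ) : ∃ c, PJ (χ ⁻¹' {c}) := by
  classical
  by_contra hcon
  have : Fintype κ := Fintype.ofFinite κ
  simp only [PJ, not_exists, not_forall] at hcon
  choose S F n hS hbad using hcon
  obtain ⟨c, a, H, h1, h2, h3⟩ := coloring χ (Finset.univ.biUnion S) (Finset.univ.biUnion F)
    (Finset.univ.sup n) (by
      intro P hP
      obtain ⟨c, -, hc⟩ := Finset.mem_biUnion.1 hP
      exact hS c P hc)
  refine hbad c a H ⟨h1, fun t ht => lt_of_le_of_lt (Finset.le_sup (Finset.mem_univ c)) (h2 t ht),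
    fun P hP f hf => h3 P ?_ f ?_⟩
  · exact Finset.mem_biUnion.2 ⟨c, Finset.mem_univ _, hP⟩
  · exact Finset.mem_biUnion.2 ⟨c, Finset.mem_univ _, hf⟩

theorem PJ.mono {A B : Set ℕ} (h : PJ A) (hAB : A ⊆ B) : PJ B := by
  intro S F n hS
  obtain ⟨a, H, h1, h2, h3⟩ := h S F n hS
  exact ⟨a, H, h1, h2, fun P hP f hf => hAB (h3 P hP f hf)⟩

theorem exists_pj_ultrafilter : ∃ p : Ultrafilter ℕ, ∀ A ∈ p, PJ A := by
  classical
  have hne : (Filter.generate {B : Set ℕ | ¬ PJ Bᶜ}).NeBot := by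
    rw [Filter.generate_neBot_iff]
    intro t ht htf
    have : Finite t := htf
    obtain ⟨c, hc⟩ := pj_cell (κ := t → Prop) (fun x B => x ∈ (B : Set ℕ))
    by_contra hemp
    rw [Set.not_nonempty_iff_eq_empty] at hemp
    by_cases hall : ∀ B, c B
    · have : (fun x (B : t) => x ∈ (B : Set ℕ)) ⁻¹' {c} ⊆ (∅ : Set ℕ) := by
        intro x hx
        rw [← hemp]
        intro B hB
        have := congrFun hx ⟨B, hB⟩
        simp only at this
        rw [this]
        exact hall _
      obtain ⟨a, H, -, -, h⟩ := (hc.mono this) {0} {0} 0 (by simp)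
      exact h 0 (by simp) 0 (by simp)
    · push Not at hall
      obtain ⟨B, hB⟩ := hall
      apply ht B.2
      refine hc.mono ?_
      intro x hx hxB
      have := congrFun hx B
      simp only at this
      exact hB (this ▸ hxB)
  obtain ⟨p, hp⟩ := Ultrafilter.exists_le (Filter.generate {B : Set ℕ | ¬ PJ Bᶜ})
  refine ⟨p, fun A hA => ?_⟩
  by_contra hn
  have : Aᶜ ∈ p := hp (Filter.mem_generate_of_mem (by simpa using hn))
  exact (Ultrafilter.compl_notMem_iff.2 hA) this

attribute [local instance] Ultrafilter.add Ultrafilter.addSemigroup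

theorem exists_idem : ∃ p : Ultrafilter ℕ, (∀ A ∈ p, PJ A) ∧
    ∀ A : Set ℕ, A ∈ p → ∀ᶠ x in (p : Filter ℕ), ∀ᶠ y in (p : Filter ℕ), x + y ∈ A := by
  obtain ⟨p0, hp0⟩ := exists_pj_ultrafilter
  have hcomp : IsCompact {p : Ultrafilter ℕ | ∀ A ∈ p, PJ A} := by
    apply IsClosed.isCompact
    have : {p : Ultrafilter ℕ | ∀ A ∈ p, PJ A} =
        ⋂ (A : Set ℕ) (_ : ¬ PJ A), {p : Ultrafilter ℕ | A ∈ p}ᶜ := by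
      ext p
      simp only [Set.mem_setOf_eq, Set.mem_iInter, Set.mem_compl_iff]
      exact forall_congr' fun A => ⟨fun h h1 h2 => h1 (h h2), fun h h2 => by
        by_contra h1; exact h h1 h2⟩
    rw [this]
    exact isClosed_iInter fun A => isClosed_iInter fun _ =>
      (ultrafilter_isOpen_basic A).isClosed_compl
  have hsg : ∀ q ∈ {p : Ultrafilter ℕ | ∀ A ∈ p, PJ A}, ∀ q' ∈ {p : Ultrafilter ℕ | ∀ A ∈ p, PJ A},
      q + q' ∈ {p : Ultrafilter ℕ | ∀ A ∈ p, PJ A} := by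
    intro q _ q' hq' A hA
    have : ∀ᶠ x in ((q + q' : Ultrafilter ℕ) : Filter ℕ), x ∈ A := hA
    rw [Ultrafilter.eventually_add] at this
    obtain ⟨x, hx⟩ := this.exists
    intro S F n hS
    obtain ⟨a, H, h1, h2, h3⟩ := hq' _ hx S F n hS
    exact ⟨x + a, H, h1, h2, fun P hP f hf => by
      have := h3 P hP f hf
      simpa [add_assoc] using this⟩
  obtain ⟨p, hp, hpp⟩ := exists_idempotent_in_compact_add_subsemigroup
    (M := Ultrafilter ℕ) Ultrafilter.continuous_add_left
    {p : Ultrafilter ℕ | ∀ A ∈ p, PJ A} ⟨p0, hp0⟩ hcomp hsg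
  refine ⟨p, hp, fun A hA => ?_⟩
  have : ∀ᶠ x in ((p + p : Ultrafilter ℕ) : Filter ℕ), x ∈ A := by
      rw [hpp]; exact hA
  rwa [Ultrafilter.eventually_add] at this

theorem rec_exists {X D : Type} [Inhabited D] (OK : D → Prop)
    (Rel : Finset X → (Finset X → D) → D → Prop)
    (hcongr : ∀ G e e' d, (∀ F, F ⊂ G → e F = e' F) → Rel G e d → Rel G e' d)
    (step : ∀ G e, (∀ F, F ⊂ G → OK (e F)) → ∃ d, OK d ∧ Rel G e d) :
    ∃ e : Finset X → D, ∀ G, OK (e G) ∧ Rel G e (e G) := by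
  classical
  let body : (G : Finset X) → ((F : Finset X) → F ⊂ G → D) → D := fun G ih =>
    if h : ∃ d, OK d ∧ Rel G (fun F => if hF : F ⊂ G then ih F hF else default) d
    then h.choose else default
  have wf : WellFounded (fun F G : Finset X => F ⊂ G) := Finset.isWellFounded_ssubset.wf
  refine ⟨wf.fix body, fun G => ?_⟩
  induction G using wf.induction with
  | _ G ih =>
  have h : ∃ d, OK d ∧ Rel G (fun F => if F ⊂ G then wf.fix body F else default) d := by
    apply step
    intro F hF
    simp only [hF, if_true]
    exact (ih F hF).1
  have e : wf.fix body G = h.choose := by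
    rw [wf.fix_eq]
    simp only [body]
    rw [dif_pos (by simpa using h)]
  rw [e]
  refine ⟨h.choose_spec.1, hcongr G _ _ _ ?_ h.choose_spec.2⟩
  intro F hF
  simp [hF]

/-- Iterated `p`-largeness of the set of completions of a list. -/
def Good (p : Ultrafilter ℕ) (C : List ℕ → Prop) : ℕ → List ℕ → Prop
  | 0, w => C w
  | k + 1, w => ∀ᶠ x in (p : Filter ℕ), Good p C k (w ++ [x])

/-- The star set. -/
def Star (p : Ultrafilter ℕ) (A : ℕ → Prop) (x : ℕ) : Prop :=
  A x ∧ ∀ᶠ y in (p : Filter ℕ), A (x + y)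

/-- A finite list of completed coordinates together with a possible pending coordinate. -/
abbrev State := List ℕ × Option (ℕ × ℕ)

/-- Extend the pending coordinate, or start a new one. -/
def nextS (a v : ℕ) : State → State
  | (w, none) => (w, some (a, v))
  | (w, some (A, B)) => (w, some (A + a, B + v))

/-- The invariant. -/
def Inv (p : Ultrafilter ℕ) (C : List ℕ → Prop) (T : Finset (ℕ → ℕ)) (m : ℕ) : State → Prop
  | (w, none) => ∀ k, w.length + k = m → Good p C k w
  | (w, some (A, B)) => ∀ k, w.length + k + 1 = m → ∀ P ∈ T,
      Star p (fun x => Good p C k (w ++ [x])) (A + P B)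

theorem shift_poly (P : Polynomial ℕ) (B : ℕ) :
    ∃ Q : Polynomial ℕ, Q.coeff 0 = 0 ∧ ∀ v, P.eval (B + v) = P.eval B + Q.eval v := by
  refine ⟨(Polynomial.taylor B P).divX * Polynomial.X, by simp, fun v => ?_⟩
  have h := congrArg (Polynomial.eval v) (Polynomial.divX_mul_X_add (Polynomial.taylor B P))
  rw [Polynomial.eval_add, Polynomial.eval_C, Polynomial.taylor_coeff_zero,
    Polynomial.taylor_eval] at h
  rw [add_comm B v, ← h, add_comm]

section CST
variable {p : Ultrafilter ℕ} {C : List ℕ → Prop} {T : Finset (ℕ → ℕ)} {m : ℕ}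

theorem star_mem_s13 (hid : ∀ A : Set ℕ, A ∈ p → ∀ᶠ x in (p : Filter ℕ),
    ∀ᶠ y in (p : Filter ℕ), x + y ∈ A) {A : ℕ → Prop} (hA : ∀ᶠ x in (p : Filter ℕ), A x) :
    ∀ᶠ x in (p : Filter ℕ), Star p A x := hA.and (hid {x | A x} hA)

theorem star_shift_s13 (hid : ∀ A : Set ℕ, A ∈ p → ∀ᶠ x in (p : Filter ℕ),
    ∀ᶠ y in (p : Filter ℕ), x + y ∈ A) {A : ℕ → Prop} {x : ℕ} (hx : Star p A x) :
    ∀ᶠ y in (p : Filter ℕ), Star p A (x + y) := by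
  filter_upwards [star_mem_s13 hid hx.2] with y hy
  refine ⟨hy.1, ?_⟩
  filter_upwards [hy.2] with z hz
  rwa [add_assoc]

theorem step_one (hid : ∀ A : Set ℕ, A ∈ p → ∀ᶠ x in (p : Filter ℕ),
    ∀ᶠ y in (p : Filter ℕ), x + y ∈ A) (hTP : ∀ P ∈ T, IsPolyZeroConst P)
    (s : State) (hs : Inv p C T m s) :
    ∃ (D : Set ℕ) (S : Finset (Polynomial ℕ)), D ∈ p ∧ (∀ P ∈ S, P.coeff 0 = 0) ∧
      ∀ a v, (∀ Q ∈ S, a + Q.eval v ∈ D) → Inv p C T m (nextS a v s) := by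
  classical
  choose! q hq0 hq using hTP
  obtain ⟨w, o⟩ := s
  by_cases hm : ∃ k, w.length + k + 1 = m
  · obtain ⟨k, hk⟩ := hm
    cases o with
    | none =>
      refine ⟨{x | Star p (fun x => Good p C k (w ++ [x])) x}, T.image q,
        star_mem_s13 hid (hs (k + 1) (by omega)), ?_, ?_⟩
      · intro P hP
        obtain ⟨P', hP', rfl⟩ := Finset.mem_image.1 hP
        exact hq0 P' hP'
      · intro a v h k' hk' P hP
        obtain rfl : k' = k := by omega
        rw [hq P hP]
        exact h _ (Finset.mem_image_of_mem q hP)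
    | some AB =>
      obtain ⟨A, B⟩ := AB
      choose Q hQ0 hQ using fun P : Polynomial ℕ => shift_poly P B
      refine ⟨{y | ∀ P ∈ T, Star p (fun x => Good p C k (w ++ [x])) (A + P B + y)},
        T.image (fun P => Q (q P)), ?_, ?_, ?_⟩
      · have : ∀ᶠ y in (p : Filter ℕ), ∀ P ∈ T,
            Star p (fun x => Good p C k (w ++ [x])) (A + P B + y) := by
          rw [Filter.eventually_all_finset]
          intro P hP
          exact star_shift_s13 hid (hs k hk P hP)
        exact this
      · intro P hP
        obtain ⟨P, hP, rfl⟩ := Finset.mem_image.1 hP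
        exact hQ0 _
      · intro a v h k' hk' P hP
        obtain rfl : k' = k := by omega
        have h1 := h _ (Finset.mem_image_of_mem (fun P => Q (q P)) hP) P hP
        have e : A + a + P (B + v) = A + P B + (a + (Q (q P)).eval v) := by
          rw [hq P hP, hq P hP, hQ]; ring
        rw [e]
        exact h1
  · refine ⟨Set.univ, ∅, Filter.univ_mem, by simp, fun a v _ => ?_⟩
    cases o with
    | none => exact fun k hk => absurd ⟨k, hk⟩ hm
    | some AB => exact fun k hk => absurd ⟨k, hk⟩ hm

theorem step_all (hid : ∀ A : Set ℕ, A ∈ p → ∀ᶠ x in (p : Filter ℕ),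
    ∀ᶠ y in (p : Filter ℕ), x + y ∈ A) (hpj : ∀ A ∈ p, PJ A)
    (hTP : ∀ P ∈ T, IsPolyZeroConst P)
    (X : Finset State) (hX : ∀ s ∈ X, Inv p C T m s) (G : Finset (ℕ → ℕ)) (n : ℕ) :
    ∃ (a : ℕ) (H : Finset ℕ), H.Nonempty ∧ (∀ t ∈ H, n < t) ∧
      ∀ s ∈ X, ∀ f ∈ G, Inv p C T m (nextS a (∑ t ∈ H, f t) s) := by
  classical
  have h := fun s hs => step_one hid hTP s (hX s hs)
  choose! D S hD hS0 hS using h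
  have hI : (⋂ s ∈ X, D s) ∈ (p : Filter ℕ) := (Filter.biInter_finset_mem X).2 hD
  obtain ⟨a, H, h1, h2, h3⟩ := hpj _ hI (X.biUnion S) G n (by
    intro P hP
    obtain ⟨s, hs, h⟩ := Finset.mem_biUnion.1 hP
    exact hS0 s hs P h)
  refine ⟨a, H, h1, h2, fun s hs f hf => hS s hs _ _ fun Q hQ => ?_⟩
  have := h3 Q (Finset.mem_biUnion.2 ⟨s, hs, hQ⟩) f hf
  exact Set.mem_iInter₂.1 this s hs

/-- The relation between the data at `G` and the data at proper subsets of `G`. -/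
def Rel (T : Finset (ℕ → ℕ)) (G : Finset (ℕ → ℕ))
    (e : Finset (ℕ → ℕ) → ℕ × Finset ℕ × Finset State) (d : ℕ × Finset ℕ × Finset State) :
    Prop :=
  d.2.1.Nonempty ∧ (∀ F, F ⊂ G → ∀ x ∈ (e F).2.1, ∀ y ∈ d.2.1, x < y) ∧
  (∀ f ∈ G, nextS d.1 (∑ t ∈ d.2.1, f t) ([], none) ∈ d.2.2) ∧
  (∀ F, F ⊂ G → ∀ s ∈ (e F).2.2, ∀ f ∈ G, nextS d.1 (∑ t ∈ d.2.1, f t) s ∈ d.2.2) ∧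
  (∀ w A B, (w, some (A, B)) ∈ d.2.2 → ∀ P ∈ T, (w ++ [A + P B], none) ∈ d.2.2)

/-- Close the pending coordinate. -/
def closeS (P : ℕ → ℕ) : State → State
  | (w, none) => (w, none)
  | (w, some (A, B)) => (w ++ [A + P B], none)

theorem inv_close {s : State} {P : ℕ → ℕ} (hP : P ∈ T) (hs : Inv p C T m s) :
    Inv p C T m (closeS P s) := by
  obtain ⟨w, o⟩ := s
  cases o with
  | none => exact hs
  | some AB =>
    obtain ⟨A, B⟩ := AB
    intro k hk
    exact (hs k (by simp at hk; omega) P hP).1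

theorem exists_data (hid : ∀ A : Set ℕ, A ∈ p → ∀ᶠ x in (p : Filter ℕ),
    ∀ᶠ y in (p : Filter ℕ), x + y ∈ A) (hpj : ∀ A ∈ p, PJ A)
    (hTP : ∀ P ∈ T, IsPolyZeroConst P) (h0 : Good p C m []) :
    ∃ e : Finset (ℕ → ℕ) → ℕ × Finset ℕ × Finset State,
      ∀ G, (∀ s ∈ (e G).2.2, Inv p C T m s) ∧ Rel T G e (e G) := by
  classical
  refine rec_exists (fun d : ℕ × Finset ℕ × Finset State => ∀ s ∈ d.2.2, Inv p C T m s)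
    (Rel T) ?_ ?_
  · rintro G e e' d he ⟨h1, h2, h3, h4, h5⟩
    refine ⟨h1, fun F hF => ?_, h3, fun F hF => ?_, h5⟩
    · rw [← he F hF]; exact h2 F hF
    · rw [← he F hF]; exact h4 F hF
  · intro G e he
    set X : Finset State := insert ([], none) (G.ssubsets.biUnion fun F => (e F).2.2) with hXd
    have hX : ∀ s ∈ X, Inv p C T m s := by
      intro s hs
      rcases Finset.mem_insert.1 hs with rfl | hs
      · intro k hk
        obtain rfl : k = m := by simpa using hk
        exact h0
      · obtain ⟨F, hF, hs⟩ := Finset.mem_biUnion.1 hs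
        exact he F (Finset.mem_ssubsets.1 hF) s hs
    obtain ⟨a, H, hH, hn, hst⟩ := step_all hid hpj hTP X hX G
      ((G.ssubsets.biUnion fun F => (e F).2.1).sup id)
    set Y : Finset State := Finset.image₂ (fun s f => nextS a (∑ t ∈ H, f t) s) X G with hY
    have hYI : ∀ s ∈ Y, Inv p C T m s := by
      intro s hs
      obtain ⟨s', hs', f, hf, rfl⟩ := Finset.mem_image₂.1 hs
      exact hst s' hs' f hf
    refine ⟨(a, H, Y ∪ Finset.image₂ closeS T Y), ?_, hH, ?_, ?_, ?_, ?_⟩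
    · intro s hs
      rcases Finset.mem_union.1 hs with hs | hs
      · exact hYI s hs
      · obtain ⟨P, hP, s', hs', rfl⟩ := Finset.mem_image₂.1 hs
        exact inv_close hP (hYI s' hs')
    · intro F hF x hx y hy
      refine lt_of_le_of_lt ?_ (hn y hy)
      exact Finset.le_sup (f := id)
        (Finset.mem_biUnion.2 ⟨F, Finset.mem_ssubsets.2 hF, hx⟩)
    · intro f hf
      exact Finset.mem_union_left _ (Finset.mem_image₂.2
        ⟨_, Finset.mem_insert_self _ _, f, hf, rfl⟩)
    · intro F hF s hs f hf
      exact Finset.mem_union_left _ (Finset.mem_image₂.2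
        ⟨s, Finset.mem_insert_of_mem (Finset.mem_biUnion.2
          ⟨F, Finset.mem_ssubsets.2 hF, hs⟩), f, hf, rfl⟩)
    · intro w A B h P hP
      refine Finset.mem_union_right _ (Finset.mem_image₂.2 ⟨P, hP, (w, some (A, B)), ?_, rfl⟩)
      rcases Finset.mem_union.1 h with h | h
      · exact h
      · obtain ⟨P', _, ⟨w', o⟩, _, h⟩ := Finset.mem_image₂.1 h
        cases o <;> simp [closeS] at h

theorem exists_good (p : Ultrafilter ℕ) {r : ℕ} (χ : List ℕ → Fin r) (k : ℕ) :
    ∀ w, ∃ j, Good p (fun L => χ L = j) k w := by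
  induction k with
  | zero => exact fun w => ⟨χ w, rfl⟩
  | succ k ih =>
    intro w
    have : ∀ᶠ x in (p : Filter ℕ), ∃ j, Good p (fun L => χ L = j) k (w ++ [x]) :=
      Filter.Eventually.of_forall fun x => ih _
    rw [Ultrafilter.eventually_exists_iff] at this
    exact this

end CST

theorem multidim
    (T : Finset (ℕ → ℕ)) (hTP : ∀ P ∈ T, IsPolyZeroConst P) (r m : ℕ)
    (χ : (Fin m → ℕ) → Fin r) :
      ∃ (j : Fin r) (α : Finset (ℕ → ℕ) → ℕ)
        (H : Finset (ℕ → ℕ) → Finset ℕ),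
        (∀ F : Finset (ℕ → ℕ), (H F).Nonempty) ∧
        (∀ F G : Finset (ℕ → ℕ), F ⊂ G →
          ∀ x ∈ H F, ∀ y ∈ H G, x < y) ∧
        (∀ G : ℕ → Finset (ℕ → ℕ),
          (∀ i j', i < j' → G i ⊂ G j') →
          ∀ f : ℕ → ℕ → ℕ, (∀ i, f i ∈ G i) →
          ∀ P : Fin m → ℕ → ℕ, (∀ l, P l ∈ T) →
          ∀ β : Fin m → Finset ℕ,
            (∀ l, (β l).Nonempty) →
            (∀ l l' : Fin m, l < l' → ∀ x ∈ β l, ∀ y ∈ β l', x < y) →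
            χ (fun l => (∑ i ∈ β l, α (G i)) +
                P l (∑ i ∈ β l, ∑ t ∈ H (G i), f i t)) = j) := by
  classical
  obtain ⟨p, hpj, hid⟩ := exists_idem
  obtain ⟨j, hj⟩ := exists_good p (fun L : List ℕ => χ (fun i => L.getD i 0)) m []
  obtain ⟨e, he⟩ := exists_data hid hpj hTP hj
  refine ⟨j, fun G => (e G).1, fun G => (e G).2.1, fun F => (he F).2.1,
    fun F G hFG => (he G).2.2.1 F hFG, ?_⟩
  intro G hG f hf P hP β hβ hβlt
  let R : ℕ → State → Prop := fun n s => s = ([], none) ∨ ∃ i < n, s ∈ (e (G i)).2.2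
  have Rmono : ∀ {n n' s}, n ≤ n' → R n s → R n' s := by
    rintro n n' s h (h1 | ⟨i, hi, h1⟩)
    · exact Or.inl h1
    · exact Or.inr ⟨i, by omega, h1⟩
  have Rnext : ∀ n s, R n s →
      R (n + 1) (nextS (e (G n)).1 (∑ t ∈ (e (G n)).2.1, f n t) s) := by
    rintro n s (rfl | ⟨i, hi, h⟩)
    · exact Or.inr ⟨n, by omega, (he (G n)).2.2.2.1 _ (hf n)⟩
    · exact Or.inr ⟨n, by omega, (he (G n)).2.2.2.2.1 _ (hG i n hi) s h _ (hf n)⟩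
  have Rclose : ∀ n w A B, R n (w, some (A, B)) → ∀ P ∈ T, R n (w ++ [A + P B], none) := by
    rintro n w A B (h | ⟨i, hi, h⟩) P hP
    · simp at h
    · exact Or.inr ⟨i, hi, (he (G i)).2.2.2.2.2 w A B h P hP⟩
  have block : ∀ (b : Finset ℕ) (n n' : ℕ) (w : List ℕ), b.Nonempty → R n (w, none) →
      (∀ x ∈ b, n ≤ x) → (∀ x ∈ b, x < n') →
      R n' (w, some (∑ i ∈ b, (e (G i)).1, ∑ i ∈ b, ∑ t ∈ (e (G i)).2.1, f i t)) := by
    intro b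
    induction b using Finset.induction_on_max with
    | empty => intro n n' w h; simp at h
    | insert a b hmax ih =>
      intro n n' w _ hR h1 h2
      have hab : a ∉ b := fun h => lt_irrefl _ (hmax a h)
      rw [Finset.sum_insert hab, Finset.sum_insert hab]
      have ha := h2 a (Finset.mem_insert_self _ _)
      refine Rmono ha ?_
      rcases b.eq_empty_or_nonempty with rfl | hb
      · have := Rnext a _ (Rmono (h1 a (Finset.mem_insert_self _ _)) hR)
        simpa [nextS] using this
      · have := Rnext a _ (ih n a w hb hR (fun x hx => h1 x (Finset.mem_insert_of_mem hx))
          hmax)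
        rw [add_comm, add_comm (∑ t ∈ (e (G a)).2.1, f a t)]
        exact this
  set val : Fin m → ℕ := fun l => (∑ i ∈ β l, (e (G i)).1) +
                P l (∑ i ∈ β l, ∑ t ∈ (e (G i)).2.1, f i t) with hval
  have main : ∀ l ≤ m, ∃ n, R n ((List.ofFn val).take l, none) ∧
      ∀ l' : Fin m, l ≤ l' → ∀ x ∈ β l', n ≤ x := by
    intro l
    induction l with
    | zero => exact fun _ => ⟨0, Or.inl (by simp), by simp⟩
    | succ l ih =>
      intro hl
      obtain ⟨n, hn, hle⟩ := ih (by omega)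
      let L : Fin m := ⟨l, by omega⟩
      refine ⟨(β L).max' (hβ L) + 1, ?_, ?_⟩
      · have := block (β L) n ((β L).max' (hβ L) + 1) _ (hβ L) hn (hle L le_rfl)
          (fun x hx => Nat.lt_succ_of_le (Finset.le_max' _ x hx))
        have h2 := Rclose _ _ _ _ this (P L) (hP L)
        rw [List.take_succ_eq_append_getElem (by simp; omega)]
        simpa using h2
      · intro l' hl' x hx
        exact hβlt L l' (Fin.lt_def.2 hl') _ (Finset.max'_mem _ _) x hx
  obtain ⟨n, hn, -⟩ := main m le_rfl
  rw [List.take_of_length_le (by simp)] at hn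
  have hI : Inv p (fun L : List ℕ => χ (fun i => L.getD i 0) = j) T m (List.ofFn val, none) := by
    rcases hn with hn | ⟨i, _, hn⟩
    · rw [hn]
      intro k hk
      obtain rfl : k = m := by simpa using hk
      exact hj
    · exact (he (G i)).1 _ hn
  have hfin := hI 0 (by simp)
  have : (fun i : Fin m => (List.ofFn val).getD i 0) = val := by
    funext i
    simp
  simp only [Good, this] at hfin
  exact hfin

/-- Equivalence of the multidimensional monochromatic form and the linear-combination
monochromatic form of the polynomial stronger central sets theorem (m-tuples of
witnessing functions). -/
theorem equivalence_multidim_vs_linear_comb_II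
    (T : Finset (ℕ → ℕ)) (hT : T.Nonempty) (hTP : ∀ P ∈ T, IsPolyZeroConst P) :
    (∀ r m : ℕ, 1 ≤ r → 1 ≤ m → ∀ χ : (Fin m → ℕ) → Fin r,
      ∃ (j : Fin r) (α : Fin m → Finset (ℕ → ℕ) → ℕ)
        (H : Fin m → Finset (ℕ → ℕ) → Finset ℕ),
        (∀ (l : Fin m) (F : Finset (ℕ → ℕ)), F.Nonempty → (H l F).Nonempty) ∧
        (∀ (l : Fin m) (F G : Finset (ℕ → ℕ)), F.Nonempty → F ⊂ G →
          ∀ x ∈ H l F, ∀ y ∈ H l G, x < y) ∧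
        (∀ G : ℕ → Finset (ℕ → ℕ),
          (∀ i, (G i).Nonempty) → (∀ i j', i < j' → G i ⊂ G j') →
          ∀ f : ℕ → ℕ → ℕ, (∀ i, f i ∈ G i) →
          ∀ P : Fin m → ℕ → ℕ, (∀ l, P l ∈ T) →
          ∀ β : Fin m → Finset ℕ,
            (∀ l, (β l).Nonempty) →
            (∀ l l' : Fin m, l < l' → ∀ x ∈ β l, ∀ y ∈ β l', x < y) →
            χ (fun l => (∑ i ∈ β l, α l (G i)) +
                P l (∑ i ∈ β l, ∑ t ∈ H l (G i), f i t)) = j))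
    ↔
    (∀ r m : ℕ, 1 ≤ r → 1 ≤ m → ∀ a : Fin m → ℕ, ∀ χ : ℕ → Fin r,
      ∃ (j : Fin r) (α : Fin m → Finset (ℕ → ℕ) → ℕ)
        (H : Fin m → Finset (ℕ → ℕ) → Finset ℕ),
        (∀ (l : Fin m) (F : Finset (ℕ → ℕ)), F.Nonempty → (H l F).Nonempty) ∧
        (∀ (l : Fin m) (F G : Finset (ℕ → ℕ)), F.Nonempty → F ⊂ G →
          ∀ x ∈ H l F, ∀ y ∈ H l G, x < y) ∧
        (∀ G : ℕ → Finset (ℕ → ℕ),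
          (∀ i, (G i).Nonempty) → (∀ i j', i < j' → G i ⊂ G j') →
          ∀ f : ℕ → ℕ → ℕ, (∀ i, f i ∈ G i) →
          ∀ P : Fin m → ℕ → ℕ, (∀ l, P l ∈ T) →
          ∀ β : Fin m → Finset ℕ,
            (∀ l, (β l).Nonempty) →
            (∀ l l' : Fin m, l < l' → ∀ x ∈ β l, ∀ y ∈ β l', x < y) →
            χ (∑ l : Fin m, a l * ((∑ i ∈ β l, α l (G i)) +
                P l (∑ i ∈ β l, ∑ t ∈ H l (G i), f i t))) = j)) := by
  constructor
  · intro h r m hr hm a χ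
    exact h r m hr hm (fun x => χ (∑ l, a l * x l))
  · intro _ r m _ _ χ
    obtain ⟨j, α, H, h1, h2, h3⟩ := multidim T hTP r m χ
    exact ⟨j, fun _ => α, fun _ => H, fun _ F _ => h1 F, fun _ F G _ hFG => h2 F G hFG,
      fun G _ hG f hf P hP β hβ hlt => h3 G hG f hf P hP β hβ hlt⟩

end MultiCST
end
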